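/- arXiv:2312.02639 — 4 statements merged into one kernel-verified Lean document; each statement's English description precedes it below -/
import Mathlib

section
/- Let G be a finite simple graph with n vertices. Then χ(Ḡ) ≥ n − hdim_{Z/2}(D(G)) − 2, where Z/2 is the field with two elements. -/
open SimpleGraph

/-- An abstract simplicial complex on the underlying vertex set `V`. -/
structure Cplx (V : Type) where
  faces : Finset V → Prop
  down_closed : ∀ ⦃σ τ : Finset V⦄, σ ⊆ τ → faces τ → faces σ

/-- The dominance complex of a graph: the faces are the subsets of the vertex set
whose complement is a dominating set. -/
def domCpx {V : Type} [Fintype V] [DecidableEq V] (G : SimpleGraph V) : Cplx V where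
  faces σ := ∀ v : V, ∃ w : V, w ∉ σ ∧ (w = v ∨ G.Adj w v)
  down_closed := by
    intro σ τ hst h v
    obtain ⟨w, hw, h2⟩ := h v
    exact ⟨w, fun hc => hw (hst hc), h2⟩

section Homology

variable {V : Type} [DecidableEq V] (K : Cplx V) (R : Type) [CommRing R]

/-- The (possibly degenerate) ordered `n`-simplices of `K`. -/
def Smpx (n : ℕ) : Type := {f : Fin (n + 1) → V // K.faces (Finset.image f Finset.univ)}

/-- The `i`-th face of an ordered simplex. -/
def Smpx.face {n : ℕ} (f : Smpx K (n + 1)) (i : Fin (n + 2)) : Smpx K n :=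
  ⟨f.1 ∘ Fin.succAbove i, by
    refine K.down_closed ?_ f.2
    intro x hx
    simp only [Finset.mem_image, Function.comp_apply] at hx ⊢
    obtain ⟨j, _, hj⟩ := hx
    exact ⟨_, Finset.mem_univ _, hj⟩⟩

/-- The simplicial boundary operator on the free modules of chains. -/
noncomputable def bdry (n : ℕ) : (Smpx K (n + 1) →₀ R) →ₗ[R] (Smpx K n →₀ R) :=
  Finsupp.linearCombination R fun f =>
    ∑ i : Fin (n + 2), ((-1 : R) ^ (i : ℕ)) • Finsupp.single (Smpx.face K f i) (1 : R)

/-- The augmentation map, into the free module on the unique `(-1)`-simplex. -/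
noncomputable def aug : (Smpx K 0 →₀ R) →ₗ[R] (Unit →₀ R) :=
  Finsupp.linearCombination R fun _ => Finsupp.single () (1 : R)

/-- Cycles: the kernels of the boundary maps of the augmented chain complex. -/
noncomputable def cyc : (n : ℕ) → Submodule R (Smpx K n →₀ R)
  | 0 => LinearMap.ker (aug K R)
  | n + 1 => LinearMap.ker (bdry K R n)

/-- Boundaries, viewed inside the cycles. -/
noncomputable def bsub (n : ℕ) : Submodule R ↥(cyc K R n) :=
  Submodule.comap (cyc K R n).subtype (LinearMap.range (bdry K R n))

/-- The reduced simplicial homology of `K` with coefficients in `R`, defined via the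
augmented chain complex of ordered simplices. -/
noncomputable def reducedHomology : ℤ → ModuleCat R
  | Int.ofNat n =>
      ModuleCat.of R
        (@HasQuotient.Quotient ↥(cyc K R n) (Submodule R ↥(cyc K R n))
          (@Submodule.hasQuotient R ↥(cyc K R n) _ _ _) (bsub K R n))
  | Int.negSucc 0 => ModuleCat.of R ((Unit →₀ R) ⧸ LinearMap.range (aug K R))
  | Int.negSucc (_ + 1) => ModuleCat.of R PUnit

/-- The `R`-homological dimension of a simplicial complex:
the supremum of the degrees with nonvanishing reduced homology, in `ℤ ∪ {±∞}`. -/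
noncomputable def hdim : EReal :=
  sSup {x : EReal | ∃ n : ℤ, x = ((n : ℝ) : EReal) ∧ Nontrivial (reducedHomology K R n)}

/-- The `R`-homological connectivity of a simplicial complex:
the supremum of the `n` such that all reduced homology in degrees `≤ n` vanishes. -/
noncomputable def conn : EReal :=
  sSup {x : EReal | ∃ n : ℤ, x = ((n : ℝ) : EReal) ∧
    ∀ i : ℤ, i ≤ n → Subsingleton (reducedHomology K R i)}

end Homology

section BoxCochains

variable {V : Type} (H : SimpleGraph V)

/-- `σ` and `τ` span a complete bipartite subgraph of `H`: the pair `(σ, τ)` is a simplex of the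
box complex of `H`. -/
def BoxFace (σ τ : Finset V) : Prop := ∀ v ∈ σ, ∀ w ∈ τ, H.Adj v w

theorem BoxFace.symm {H : SimpleGraph V} {σ τ : Finset V} (h : BoxFace H σ τ) :
    BoxFace H τ σ := fun v hv w hw => (h w hw v hv).symm

theorem boxFace_comm (σ τ : Finset V) : BoxFace H σ τ ↔ BoxFace H τ σ :=
  ⟨BoxFace.symm, BoxFace.symm⟩

theorem BoxFace.mono {H : SimpleGraph V} {σ τ σ' τ' : Finset V} (h : BoxFace H σ τ)
    (hσ : σ' ⊆ σ) (hτ : τ' ⊆ τ) : BoxFace H σ' τ' :=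
  fun v hv w hw => h v (hσ hv) w (hτ hw)

/-- The involution of cochains exchanging the two sides of the box complex. -/
def boxSwap : Module.End (ZMod 2) (Finset V → Finset V → ZMod 2) where
  toFun f σ τ := f τ σ
  map_add' _ _ := rfl
  map_smul' _ _ := rfl

theorem boxSwap_apply (f : Finset V → Finset V → ZMod 2) (σ τ : Finset V) :
    boxSwap f σ τ = f τ σ := rfl

theorem charP_end_boxCochains :
    CharP (Module.End (ZMod 2) (Finset V → Finset V → ZMod 2)) 2 :=
  charP_of_injective_algebraMap (algebraMap (ZMod 2)
    (Module.End (ZMod 2) (Finset V → Finset V → ZMod 2))).injective 2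

/-- Cochains of the box complex supported on the simplices with `t` vertices. -/
def IsBoxCochain (t : ℕ) (f : Finset V → Finset V → ZMod 2) : Prop :=
  ∀ σ τ, f σ τ ≠ 0 → BoxFace H σ τ ∧ σ.card + τ.card = t

/-- `σ` is a simplex of the neighborhood complex of `H`. -/
def HasCommonNeighbor (σ : Finset V) : Prop := ∃ v, ∀ u ∈ σ, H.Adj u v

variable {H}

theorem HasCommonNeighbor.mono {σ τ : Finset V} (h : HasCommonNeighbor H τ) (hs : σ ⊆ τ) :
    HasCommonNeighbor H σ := h.imp fun _ hv u hu => hv u (hs hu)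

theorem IsBoxCochain.add {t : ℕ} {f g : Finset V → Finset V → ZMod 2}
    (hf : IsBoxCochain H t f) (hg : IsBoxCochain H t g) : IsBoxCochain H t (f + g) := by
  intro σ τ h
  by_cases h1 : f σ τ = 0
  · exact hg σ τ fun h2 => h (by simp [h1, h2])
  · exact hf σ τ h1

theorem IsBoxCochain.zero (t : ℕ) : IsBoxCochain H t 0 := fun _ _ h => absurd rfl h

theorem IsBoxCochain.sum {ι : Type*} {t : ℕ} (s : Finset ι)
    {f : ι → Finset V → Finset V → ZMod 2} (hf : ∀ i ∈ s, IsBoxCochain H t (f i)) :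
    IsBoxCochain H t (∑ i ∈ s, f i) :=
  Finset.sum_induction f (IsBoxCochain H t) (fun _ _ => IsBoxCochain.add) (.zero t) hf

theorem IsBoxCochain.swap {t : ℕ} {f : Finset V → Finset V → ZMod 2}
    (hf : IsBoxCochain H t f) : IsBoxCochain H t (boxSwap f) := fun σ τ h =>
  ⟨(hf τ σ h).1.symm, by rw [add_comm]; exact (hf τ σ h).2⟩

variable (H) [DecidableEq V]

open Classical in
/-- The part of the coboundary of the box complex which adds the vertex `v` on the left. -/
noncomputable def boxLeft (v : V) : Module.End (ZMod 2) (Finset V → Finset V → ZMod 2) where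
  toFun f σ τ := if v ∈ σ ∧ BoxFace H σ τ then f (σ.erase v) τ else 0
  map_add' f g := by ext σ τ; simp only [Pi.add_apply]; split_ifs <;> simp
  map_smul' a f := by ext σ τ; simp only [Pi.smul_apply, RingHom.id_apply]; split_ifs <;> simp

open Classical in
/-- The part of the coboundary of the box complex which adds the vertex `v` on the right. -/
noncomputable def boxRight (v : V) : Module.End (ZMod 2) (Finset V → Finset V → ZMod 2) where
  toFun f σ τ := if v ∈ τ ∧ BoxFace H σ τ then f σ (τ.erase v) else 0
  map_add' f g := by ext σ τ; simp only [Pi.add_apply]; split_ifs <;> simp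
  map_smul' a f := by ext σ τ; simp only [Pi.smul_apply, RingHom.id_apply]; split_ifs <;> simp

open Classical in
theorem boxLeft_apply (v : V) (f : Finset V → Finset V → ZMod 2) (σ τ : Finset V) :
    boxLeft H v f σ τ = if v ∈ σ ∧ BoxFace H σ τ then f (σ.erase v) τ else 0 := rfl

open Classical in
theorem boxRight_apply (v : V) (f : Finset V → Finset V → ZMod 2) (σ τ : Finset V) :
    boxRight H v f σ τ = if v ∈ τ ∧ BoxFace H σ τ then f σ (τ.erase v) else 0 := rfl

theorem boxSwap_boxLeft (v : V) (f : Finset V → Finset V → ZMod 2) :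
    boxSwap (boxLeft H v f) = boxRight H v (boxSwap f) := by
  ext σ τ
  classical exact if_congr (and_congr_right fun _ => boxFace_comm H τ σ) rfl rfl

theorem boxSwap_boxRight (v : V) (f : Finset V → Finset V → ZMod 2) :
    boxSwap (boxRight H v f) = boxLeft H v (boxSwap f) := by
  ext σ τ
  classical exact if_congr (and_congr_right fun _ => boxFace_comm H τ σ) rfl rfl

theorem commute_boxLeft_boxLeft (v w : V) : Commute (boxLeft H v) (boxLeft H w) := by
  refine LinearMap.ext fun f => funext fun σ => funext fun τ => ?_
  simp only [Module.End.mul_apply, boxLeft_apply, Finset.mem_erase]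
  by_cases h : BoxFace H σ τ
  · have h1 := h.mono (σ.erase_subset v) (Finset.Subset.refl τ)
    have h2 := h.mono (σ.erase_subset w) (Finset.Subset.refl τ)
    simp only [h, h1, h2, and_true, Finset.erase_right_comm (a := v) (b := w)]
    by_cases hvw : v = w
    · simp [hvw]
    · have : w ≠ v := Ne.symm hvw
      by_cases hv : v ∈ σ <;> by_cases hw : w ∈ σ <;> simp [*]
  · simp [h]

theorem commute_boxLeft_boxRight (v w : V) : Commute (boxLeft H v) (boxRight H w) := by
  refine LinearMap.ext fun f => funext fun σ => funext fun τ => ?_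
  simp only [Module.End.mul_apply, boxLeft_apply, boxRight_apply]
  by_cases h : BoxFace H σ τ
  · have h1 := h.mono (σ.erase_subset v) (Finset.Subset.refl τ)
    have h2 := h.mono (Finset.Subset.refl σ) (τ.erase_subset w)
    by_cases hv : v ∈ σ <;> by_cases hw : w ∈ τ <;> simp [*]
  · simp [h]

theorem commute_boxRight_boxRight (v w : V) : Commute (boxRight H v) (boxRight H w) := by
  refine LinearMap.ext fun f => ?_
  have h := LinearMap.congr_fun (commute_boxLeft_boxLeft H v w).eq (boxSwap f)
  have h' := congrArg boxSwap h
  simp only [Module.End.mul_apply, boxSwap_boxLeft] at h'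
  exact h'

theorem boxLeft_mul_self (v : V) : boxLeft H v * boxLeft H v = 0 := by
  refine LinearMap.ext fun f => funext fun σ => funext fun τ => ?_
  simp [boxLeft_apply]

theorem boxRight_mul_self (v : V) : boxRight H v * boxRight H v = 0 := by
  refine LinearMap.ext fun f => funext fun σ => funext fun τ => ?_
  simp [boxRight_apply]

theorem boxLeft_mul_boxRight {v w : V} (h : ¬ H.Adj v w) : boxLeft H v * boxRight H w = 0 := by
  refine LinearMap.ext fun f => funext fun σ => funext fun τ => ?_
  simp only [Module.End.mul_apply, boxLeft_apply, boxRight_apply, LinearMap.zero_apply,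
    Pi.zero_apply]
  split_ifs with h1 h2
  · exact absurd (h1.2 v h1.1 w h2.1) h
  all_goals rfl

variable {H}

theorem IsBoxCochain.boxLeft {t : ℕ} {f : Finset V → Finset V → ZMod 2}
    (hf : IsBoxCochain H t f) (v : V) : IsBoxCochain H (t + 1) (boxLeft H v f) := by
  intro σ τ h
  rw [boxLeft_apply] at h
  split_ifs at h with h1
  · have := (hf _ _ h).2
    have h2 := Finset.card_erase_add_one h1.1
    exact ⟨h1.2, by omega⟩
  · exact absurd rfl h

theorem IsBoxCochain.boxRight {t : ℕ} {f : Finset V → Finset V → ZMod 2}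
    (hf : IsBoxCochain H t f) (v : V) : IsBoxCochain H (t + 1) (boxRight H v f) := by
  have := (hf.swap.boxLeft v).swap
  rwa [boxSwap_boxLeft] at this

variable (H)

theorem sum_mul_self_eq_zero {A ι : Type*} [Ring A] [CharP A 2] (s : Finset ι) (x : ι → A)
    (hcomm : ∀ i j, Commute (x i) (x j)) (hsq : ∀ i, x i * x i = 0) :
    (∑ i ∈ s, x i) * ∑ i ∈ s, x i = 0 := by
  classical
  induction s using Finset.induction_on with
  | empty => simp
  | insert a s ha ih =>
    have hc : Commute (x a) (∑ i ∈ s, x i) := Commute.sum_right _ _ _ fun i _ => hcomm a i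
    rw [Finset.sum_insert ha, add_mul, mul_add, mul_add, hsq, ih, hc.eq, zero_add, add_zero,
      CharTwo.add_self_eq_zero]

variable [Fintype V]

/-- The coboundary operator of the augmented cochain complex of the box complex. -/
noncomputable def boxCobdry : Module.End (ZMod 2) (Finset V → Finset V → ZMod 2) :=
  ∑ v, (boxLeft H v + boxRight H v)

theorem boxCobdry_boxCobdry (f : Finset V → Finset V → ZMod 2) :
    boxCobdry H (boxCobdry H f) = 0 := by
  have := charP_end_boxCochains (V := V)
  have h := sum_mul_self_eq_zero Finset.univ (fun v => boxLeft H v + boxRight H v)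
    (fun v w => ((commute_boxLeft_boxLeft H v w).add_right
      (commute_boxLeft_boxRight H v w)).add_left
      ((commute_boxLeft_boxRight H w v).symm.add_right (commute_boxRight_boxRight H v w)))
    (fun v => by
      rw [add_mul, mul_add, mul_add, boxLeft_mul_self, boxRight_mul_self,
        ← (commute_boxLeft_boxRight H v v).eq, boxLeft_mul_boxRight H (H.irrefl)]
      simp)
  exact LinearMap.congr_fun h f

theorem boxSwap_boxCobdry (f : Finset V → Finset V → ZMod 2) :
    boxSwap (boxCobdry H f) = boxCobdry H (boxSwap f) := by
  simp only [boxCobdry, LinearMap.sum_apply, LinearMap.add_apply, map_sum, map_add,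
    boxSwap_boxLeft, boxSwap_boxRight]
  exact Finset.sum_congr rfl fun v _ => add_comm _ _

open Classical in
theorem boxCobdry_apply (f : Finset V → Finset V → ZMod 2) (σ τ : Finset V) :
    boxCobdry H f σ τ = if BoxFace H σ τ then
      ∑ v ∈ σ, f (σ.erase v) τ + ∑ v ∈ τ, f σ (τ.erase v) else 0 := by
  simp only [boxCobdry, LinearMap.sum_apply, LinearMap.add_apply, Finset.sum_apply,
    Pi.add_apply, boxLeft_apply, boxRight_apply, Finset.sum_add_distrib]
  by_cases h : BoxFace H σ τ <;> simp [h, Finset.sum_ite_mem]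

variable {H}

theorem IsBoxCochain.boxCobdry {t : ℕ} {f : Finset V → Finset V → ZMod 2}
    (hf : IsBoxCochain H t f) : IsBoxCochain H (t + 1) (boxCobdry H f) := by
  rw [_root_.boxCobdry, LinearMap.sum_apply]
  exact IsBoxCochain.sum _ fun v _ => (hf.boxLeft v).add (hf.boxRight v)

variable (H)

/-- The cohomology with `ZMod 2` coefficients of the full simplex relative to the neighborhood
complex vanishes on simplices with `t` vertices. -/
def RelAcyclicAt (t : ℕ) : Prop :=
  ∀ z : Finset V → ZMod 2, (∀ σ, z σ ≠ 0 → ¬ HasCommonNeighbor H σ ∧ σ.card = t) →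
    (∀ σ, ∑ v ∈ σ, z (σ.erase v) = 0) →
    ∃ w : Finset V → ZMod 2, (∀ σ, w σ ≠ 0 → ¬ HasCommonNeighbor H σ ∧ σ.card + 1 = t) ∧
      ∀ σ, ∑ v ∈ σ, w (σ.erase v) = z σ

variable {H}

theorem exists_boxCobdry_of_vanish {t : ℕ} (hacyc : RelAcyclicAt H t)
    {f : Finset V → Finset V → ZMod 2} (hf : IsBoxCochain H t f) (hd : boxCobdry H f = 0)
    (hN : ∀ σ τ, HasCommonNeighbor H σ → f σ τ = 0) :
    ∃ g, (∀ s, t = s + 1 → IsBoxCochain H s g) ∧ (t = 0 → g = 0) ∧ f = boxCobdry H g := by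
  classical
  have hempty : ∀ σ, BoxFace H σ ∅ := fun σ v _ w hw => by simp at hw
  have hface : ∀ {σ τ : Finset V}, BoxFace H σ τ → τ ≠ ∅ → HasCommonNeighbor H σ := by
    intro σ τ h hne
    obtain ⟨v, hv⟩ := Finset.nonempty_iff_ne_empty.mpr hne
    exact ⟨v, fun u hu => h u hu v hv⟩
  obtain ⟨w, hw, hwz⟩ := hacyc (fun σ => f σ ∅)
    (fun σ h => ⟨fun hc => h (hN σ ∅ hc), by simpa using (hf σ ∅ h).2⟩)
    (fun σ => by simpa [boxCobdry_apply, hempty] using congrFun (congrFun hd σ) ∅)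
  refine ⟨fun σ τ => if τ = ∅ then w σ else 0, ?_, ?_, ?_⟩
  · intro s hs σ τ h
    simp only [ne_eq, ite_eq_right_iff, Classical.not_imp] at h
    obtain ⟨rfl, h⟩ := h
    have := (hw σ h).2
    exact ⟨hempty σ, by simp only [Finset.card_empty]; omega⟩
  · rintro rfl
    ext σ τ
    by_contra h
    simp only [Pi.zero_apply, ite_eq_right_iff, Classical.not_imp] at h
    exact absurd (hw σ h.2).2 (by omega)
  · ext σ τ
    rw [boxCobdry_apply]
    by_cases hτ : τ = ∅
    · subst hτ
      simp [hempty, hwz]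
    by_cases hB : BoxFace H σ τ
    · have hσ := hface hB hτ
      have hw0 : w σ = 0 := by
        by_contra h
        exact (hw σ h).1 hσ
      simp [hN σ τ hσ, hτ, hw0]
    · rw [if_neg hB]
      by_contra h
      exact hB (hf σ τ h).1

theorem exists_boxCobdry_of_vanish_below {t : ℕ} (hacyc : RelAcyclicAt H t) (k : ℕ) :
    ∀ (p : ℕ), p + k = Fintype.card V + 1 → ∀ {f : Finset V → Finset V → ZMod 2},
      IsBoxCochain H t f → boxCobdry H f = 0 →
      (∀ σ τ, HasCommonNeighbor H σ → σ.card < p → f σ τ = 0) →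
      ∃ g, (∀ s, t = s + 1 → IsBoxCochain H s g) ∧ (t = 0 → g = 0) ∧ f = boxCobdry H g := by
  classical
  induction k with
  | zero =>
    intro p hp f hf hd hN
    refine exists_boxCobdry_of_vanish hacyc hf hd fun σ τ h => hN σ τ h ?_
    have := Finset.card_le_univ σ
    omega
  | succ k ih =>
    intro p hp f hf hd hN
    -- the cone construction towards a common neighbor
    let h : Finset V → Finset V → ZMod 2 := fun σ τ =>
      if hσ : HasCommonNeighbor H σ then
        if hσ.choose ∈ τ then 0 else f σ (insert hσ.choose τ)
      else 0
    have hh : ∀ s, t = s + 1 → IsBoxCochain H s h := by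
      intro s hs σ τ hne
      simp only [h] at hne
      split_ifs at hne with h1 h2
      · exact absurd rfl hne
      · have h3 := hf _ _ hne
        rw [Finset.card_insert_of_notMem h2] at h3
        exact ⟨h3.1.mono (Finset.Subset.refl _) (Finset.subset_insert _ _), by omega⟩
      · exact absurd rfl hne
    have hh0 : t = 0 → h = 0 := by
      rintro rfl
      ext σ τ
      by_contra hne
      simp only [h, Pi.zero_apply] at hne
      split_ifs at hne with h1 h2
      · exact absurd rfl hne
      · have h3 := (hf _ _ hne).2
        rw [Finset.card_insert_of_notMem h2] at h3
        omega
      · exact absurd rfl hne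
    have hdh : IsBoxCochain H t (boxCobdry H h) := by
      cases t with
      | zero => rw [hh0 rfl, map_zero]; exact .zero 0
      | succ s => exact (hh s rfl).boxCobdry
    obtain ⟨g, hg, hg0, hfg⟩ := ih (p + 1) (by omega) (hf.add hdh)
      (by rw [map_add, hd, boxCobdry_boxCobdry, add_zero]) (by
        intro σ τ hσ hcard
        rw [Pi.add_apply, Pi.add_apply]
        by_cases hB : BoxFace H σ τ
        swap
        · have h1 : f σ τ = 0 := by
            by_contra hne
            exact hB (hf σ τ hne).1
          rw [h1, boxCobdry_apply, if_neg hB, add_zero]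
        have hsmall : ∀ v ∈ σ, ∀ ρ, f (σ.erase v) ρ = 0 := fun v hv ρ =>
          hN _ _ (hσ.mono (σ.erase_subset v)) (by
            have := Finset.card_erase_add_one hv
            omega)
        have hleft : ∑ v ∈ σ, h (σ.erase v) τ = 0 := by
          refine Finset.sum_eq_zero fun v hv => ?_
          simp only [h]
          split_ifs
          · rfl
          · exact hsmall v hv _
          · rfl
        rw [boxCobdry_apply, if_pos hB, hleft, zero_add]
        have ha := hσ.choose_spec
        have hval : ∀ ρ, h σ ρ = if hσ.choose ∈ ρ then 0 else f σ (insert hσ.choose ρ) :=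
          fun ρ => by simp only [h, dif_pos hσ]
        generalize hσ.choose = a at ha hval
        simp only [hval]
        by_cases haτ : a ∈ τ
        · rw [Finset.sum_eq_single_of_mem a haτ]
          · simp [Finset.insert_erase haτ, CharTwo.add_self_eq_zero]
          · intro b _ hb
            simp [haτ, hb.symm]
        · have hBa : BoxFace H σ (insert a τ) := by
            intro v hv w hw
            rcases Finset.mem_insert.mp hw with rfl | hw
            · exact ha v hv
            · exact hB v hv w hw
          have h1 := congrFun (congrFun hd σ) (insert a τ)
          rw [boxCobdry_apply, if_pos hBa, Finset.sum_eq_zero fun v hv => hsmall v hv _,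
            zero_add, Finset.sum_insert haτ, Finset.erase_insert haτ] at h1
          refine Eq.trans ?_ h1
          congr 1
          refine Finset.sum_congr rfl fun u hu => ?_
          rw [if_neg fun hc => haτ (Finset.mem_of_mem_erase hc),
            Finset.erase_insert_of_ne fun hc : a = u => haτ (hc ▸ hu)])
    refine ⟨g + h, fun s hs => (hg s hs).add (hh s hs), fun h0 => ?_, ?_⟩
    · rw [hg0 h0, hh0 h0, add_zero]
    · rw [map_add, ← hfg, add_assoc, CharTwo.add_self_eq_zero, add_zero]

theorem exists_boxCobdry {t : ℕ} (hacyc : RelAcyclicAt H t)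
    {f : Finset V → Finset V → ZMod 2} (hf : IsBoxCochain H t f) (hd : boxCobdry H f = 0) :
    ∃ g, (∀ s, t = s + 1 → IsBoxCochain H s g) ∧ (t = 0 → g = 0) ∧ f = boxCobdry H g :=
  exists_boxCobdry_of_vanish_below hacyc (Fintype.card V + 1) 0 (zero_add _) hf hd
    fun _ _ _ h => absurd h (Nat.not_lt_zero _)

end BoxCochains

section AlternatingCochains

variable {S M : Type*} [Semiring S] [AddCommGroup M] [Module S M]
  (X Y : ℕ → Module.End S M) (m₀ : M)

/-- `alternating X Y m₀ j t` is the sum of the alternating words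
`⋯ X i₂ (Y i₁ (X i₀ m₀))` of length `t` with `i₀ < i₁ < i₂ < ⋯ < j`. -/
def alternating : ℕ → ℕ → M
  | 0, 0 => m₀
  | 0, _ + 1 => 0
  | j + 1, 0 => alternating j 0
  | j + 1, t + 1 =>
    alternating j (t + 1) + (if Even t then X j else Y j) (alternating j t)

theorem alternating_zero_right (j : ℕ) : alternating X Y m₀ j 0 = m₀ := by
  induction j with
  | zero => rfl
  | succ j ih => exact ih

theorem alternating_eq_zero {j t : ℕ} (h : j < t) : alternating X Y m₀ j t = 0 := by
  induction j generalizing t with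
  | zero => cases t with
    | zero => omega
    | succ t => rfl
  | succ j ih => cases t with
    | zero => omega
    | succ t => rw [alternating, ih (by omega), ih (by omega), map_zero, add_zero]

variable {X Y m₀}

theorem sum_apply_alternating (T : Module.End S M) (h2 : ∀ x : M, x + x = 0)
    (hXX : ∀ i j x, X i (X j x) = X j (X i x)) (hXY : ∀ i j x, X i (Y j x) = Y j (X i x))
    (hYY : ∀ i j x, Y i (Y j x) = Y j (Y i x)) (hX : ∀ i x, X i (X i x) = 0)
    (hY : ∀ i x, Y i (Y i x) = 0) (hXY0 : ∀ i x, X i (Y i x) = 0)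
    (hTX : ∀ i x, T (X i x) = Y i (T x)) (hTY : ∀ i x, T (Y i x) = X i (T x))
    (hT : T m₀ = m₀) (j t : ℕ) :
    ∑ i ∈ Finset.range j, (X i (alternating X Y m₀ j t) + Y i (alternating X Y m₀ j t)) =
      alternating X Y m₀ j (t + 1) + T (alternating X Y m₀ j (t + 1)) := by
  have hYX0 : ∀ i x, Y i (X i x) = 0 := fun i x => by rw [← hXY, hXY0]
  induction j generalizing t with
  | zero => simp [alternating]
  | succ j ih =>
    cases t with
    | zero =>
      have h0 := ih 0
      simp only [alternating_zero_right] at h0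
      have h1 : alternating X Y m₀ (j + 1) (0 + 1) = alternating X Y m₀ j (0 + 1) + X j m₀ := by
        rw [alternating, alternating_zero_right, if_pos Even.zero]
      rw [Finset.sum_range_succ, h1, alternating_zero_right, h0, map_add, hTX, hT]
      abel
    | succ t =>
      have h1 := ih t
      have h3 := ih (t + 1)
      rw [Finset.sum_range_succ]
      simp only [alternating]
      by_cases he : Even t
      · have ho : ¬ Even (t + 1) := by simpa [Nat.even_add_one] using he
        simp only [he, ho, if_true, if_false, map_add, hX, hYX0, add_zero, hTY]
        have h4 : ∑ i ∈ Finset.range j, (X i (X j (alternating X Y m₀ j t)) +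
            Y i (X j (alternating X Y m₀ j t))) = X j (alternating X Y m₀ j (t + 1)) +
              X j (T (alternating X Y m₀ j (t + 1))) := by
          rw [← map_add, ← h1, map_sum]
          exact Finset.sum_congr rfl fun i _ => by rw [map_add, hXX i j, hXY j i]
        have h5 := h2 (X j (alternating X Y m₀ j (t + 1)))
        calc _ = (∑ i ∈ Finset.range j, (X i (alternating X Y m₀ j (t + 1)) +
              Y i (alternating X Y m₀ j (t + 1)))) +
            (∑ i ∈ Finset.range j, (X i (X j (alternating X Y m₀ j t)) +
              Y i (X j (alternating X Y m₀ j t)))) +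
            (X j (alternating X Y m₀ j (t + 1)) + Y j (alternating X Y m₀ j (t + 1))) := by
              rw [← Finset.sum_add_distrib]
              congr 1
              exact Finset.sum_congr rfl fun i _ => by abel
          _ = alternating X Y m₀ j (t + 1 + 1) + T (alternating X Y m₀ j (t + 1 + 1)) +
              Y j (alternating X Y m₀ j (t + 1)) + X j (T (alternating X Y m₀ j (t + 1))) +
              (X j (alternating X Y m₀ j (t + 1)) + X j (alternating X Y m₀ j (t + 1))) := by
              rw [h3, h4]; abel
          _ = _ := by rw [h5]; abel
      · have ho : Even (t + 1) := by simpa [Nat.even_add_one] using he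
        simp only [he, ho, if_true, if_false, map_add, hY, hXY0, add_zero, hTX]
        have h4 : ∑ i ∈ Finset.range j, (X i (Y j (alternating X Y m₀ j t)) +
            Y i (Y j (alternating X Y m₀ j t))) = Y j (alternating X Y m₀ j (t + 1)) +
              Y j (T (alternating X Y m₀ j (t + 1))) := by
          rw [← map_add, ← h1, map_sum]
          exact Finset.sum_congr rfl fun i _ => by rw [map_add, hXY i j, hYY i j]
        have h5 := h2 (Y j (alternating X Y m₀ j (t + 1)))
        calc _ = (∑ i ∈ Finset.range j, (X i (alternating X Y m₀ j (t + 1)) +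
              Y i (alternating X Y m₀ j (t + 1)))) +
            (∑ i ∈ Finset.range j, (X i (Y j (alternating X Y m₀ j t)) +
              Y i (Y j (alternating X Y m₀ j t)))) +
            (X j (alternating X Y m₀ j (t + 1)) + Y j (alternating X Y m₀ j (t + 1))) := by
              rw [← Finset.sum_add_distrib]
              congr 1
              exact Finset.sum_congr rfl fun i _ => by abel
          _ = alternating X Y m₀ j (t + 1 + 1) + T (alternating X Y m₀ j (t + 1 + 1)) +
              X j (alternating X Y m₀ j (t + 1)) + Y j (T (alternating X Y m₀ j (t + 1))) +
              (Y j (alternating X Y m₀ j (t + 1)) + Y j (alternating X Y m₀ j (t + 1))) := by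
              rw [h3, h4]; abel
          _ = _ := by rw [h5]; abel

end AlternatingCochains

section Lovasz

variable {V : Type} [Fintype V] [DecidableEq V] {H : SimpleGraph V}

/-- The homological form of Lovász's bound: if the relative cohomology of the neighborhood complex
vanished up to the number of colors, the box complex would be too connected to be properly
colored. -/
theorem not_forall_relAcyclicAt {m : ℕ} (hcol : H.Colorable m) :
    ¬ ∀ t ≤ m, RelAcyclicAt H t := by
  classical
  intro hacyc
  obtain ⟨c⟩ := hcol
  have := charP_end_boxCochains (V := V)
  have h2 : ∀ x : Finset V → Finset V → ZMod 2, x + x = 0 := CharTwo.add_self_eq_zero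
  let L : ℕ → Module.End (ZMod 2) (Finset V → Finset V → ZMod 2) := fun i =>
    ∑ v with (c v : ℕ) = i, boxLeft H v
  let R : ℕ → Module.End (ZMod 2) (Finset V → Finset V → ZMod 2) := fun i =>
    ∑ v with (c v : ℕ) = i, boxRight H v
  let e : Finset V → Finset V → ZMod 2 := fun σ τ => if σ = ∅ ∧ τ = ∅ then 1 else 0
  have hLL : ∀ i j, Commute (L i) (L j) := fun i j =>
    Commute.sum_left _ _ _ fun v _ => Commute.sum_right _ _ _ fun w _ =>
      commute_boxLeft_boxLeft H v w
  have hLR : ∀ i j, Commute (L i) (R j) := fun i j =>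
    Commute.sum_left _ _ _ fun v _ => Commute.sum_right _ _ _ fun w _ =>
      commute_boxLeft_boxRight H v w
  have hRR : ∀ i j, Commute (R i) (R j) := fun i j =>
    Commute.sum_left _ _ _ fun v _ => Commute.sum_right _ _ _ fun w _ =>
      commute_boxRight_boxRight H v w
  have hL0 : ∀ i, L i * L i = 0 := fun i =>
    sum_mul_self_eq_zero _ _ (commute_boxLeft_boxLeft H) (boxLeft_mul_self H)
  have hR0 : ∀ i, R i * R i = 0 := fun i =>
    sum_mul_self_eq_zero _ _ (commute_boxRight_boxRight H) (boxRight_mul_self H)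
  have hLR0 : ∀ i, L i * R i = 0 := by
    intro i
    simp only [L, R, Finset.sum_mul_sum]
    refine Finset.sum_eq_zero fun v hv => Finset.sum_eq_zero fun w hw =>
      boxLeft_mul_boxRight H fun hadj => c.valid hadj (Fin.ext ?_)
    rw [(Finset.mem_filter.mp hv).2, (Finset.mem_filter.mp hw).2]
  have hTL : ∀ i x, boxSwap (L i x) = R i (boxSwap x) := fun i x => by
    simp only [L, R, LinearMap.sum_apply, map_sum, boxSwap_boxLeft]
  have hTR : ∀ i x, boxSwap (R i x) = L i (boxSwap x) := fun i x => by
    simp only [L, R, LinearMap.sum_apply, map_sum, boxSwap_boxRight]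
  have hTe : boxSwap e = e := by
    ext σ τ
    exact if_congr and_comm rfl rfl
  let α : ℕ → Finset V → Finset V → ZMod 2 :=
    alternating L R e m
  have hd : ∀ x, ∑ i ∈ Finset.range m, (L i x + R i x) = boxCobdry H x := by
    intro x
    simp only [L, R, boxCobdry, LinearMap.sum_apply, LinearMap.add_apply]
    simp only [← Finset.sum_add_distrib]
    exact Finset.sum_fiberwise_of_maps_to (fun v _ => Finset.mem_range.mpr (c v).2) _
  have hα : ∀ t, boxCobdry H (α t) = α (t + 1) + boxSwap (α (t + 1)) := by
    intro t
    rw [← hd]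
    exact sum_apply_alternating boxSwap h2
      (fun i j x => LinearMap.congr_fun (hLL i j).eq x)
      (fun i j x => LinearMap.congr_fun (hLR i j).eq x)
      (fun i j x => LinearMap.congr_fun (hRR i j).eq x)
      (fun i x => LinearMap.congr_fun (hL0 i) x) (fun i x => LinearMap.congr_fun (hR0 i) x)
      (fun i x => LinearMap.congr_fun (hLR0 i) x) hTL hTR hTe m t
  have hLdeg : ∀ i t x, IsBoxCochain H t x → IsBoxCochain H (t + 1) (L i x) := by
    intro i t x hx
    simp only [L, LinearMap.sum_apply]
    exact IsBoxCochain.sum _ fun v _ => hx.boxLeft v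
  have hRdeg : ∀ i t x, IsBoxCochain H t x → IsBoxCochain H (t + 1) (R i x) := by
    intro i t x hx
    simp only [R, LinearMap.sum_apply]
    exact IsBoxCochain.sum _ fun v _ => hx.boxRight v
  have hedeg : IsBoxCochain H 0 e := by
    intro σ τ h
    simp only [e, ne_eq, ite_eq_right_iff, Classical.not_imp] at h
    obtain ⟨⟨rfl, rfl⟩, -⟩ := h
    exact ⟨fun v hv => by simp at hv, by simp⟩
  have hαdeg : ∀ j t, IsBoxCochain H t (alternating L R e j t) := by
    intro j
    induction j with
    | zero => intro t; cases t with
      | zero => exact hedeg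
      | succ t => exact .zero _
    | succ j ih => intro t; cases t with
      | zero => exact ih 0
      | succ t =>
        rw [alternating]
        refine (ih _).add ?_
        split_ifs
        · exact hLdeg _ _ _ (ih t)
        · exact hRdeg _ _ _ (ih t)
  have hswap : ∀ x : Finset V → Finset V → ZMod 2, boxSwap (boxSwap x) = x := fun x => rfl
  have hdesc : ∀ k t, t + k = m → ∃ β, IsBoxCochain H t β ∧
      boxCobdry H (α t + (β + boxSwap β)) = 0 := by
    intro k
    induction k with
    | zero =>
      intro t ht
      refine ⟨0, .zero _, ?_⟩
      have h0 : α (t + 1) = 0 := alternating_eq_zero _ _ _ (by omega)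
      rw [map_zero, add_zero, add_zero, hα, h0, map_zero, add_zero]
    | succ k ih =>
      intro t ht
      obtain ⟨β, hβ, hβd⟩ := ih (t + 1) (by omega)
      obtain ⟨γ, hγ, -, hγd⟩ := exists_boxCobdry (hacyc (t + 1) (by omega))
        ((hαdeg m (t + 1)).add (hβ.add hβ.swap)) hβd
      refine ⟨γ, hγ t rfl, ?_⟩
      rw [map_add, map_add, ← boxSwap_boxCobdry, ← hγd, hα]
      simp only [map_add, hswap]
      have h3 := h2 (α (t + 1))
      have h4 := h2 (boxSwap (α (t + 1)))
      have h5 := h2 β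
      have h6 := h2 (boxSwap β)
      change α (t + 1) + boxSwap (α (t + 1)) + (α (t + 1) + (β + boxSwap β) +
        (boxSwap (α (t + 1)) + (boxSwap β + β))) = 0
      calc _ = (α (t + 1) + α (t + 1)) + (boxSwap (α (t + 1)) + boxSwap (α (t + 1))) +
            (β + β) + (boxSwap β + boxSwap β) := by abel
        _ = 0 := by rw [h3, h4, h5, h6]; simp
  obtain ⟨β, hβ, hβd⟩ := hdesc m 0 (zero_add m)
  obtain ⟨γ, -, hγ, hγd⟩ := exists_boxCobdry (hacyc 0 (Nat.zero_le m))
    ((hαdeg m 0).add (hβ.add hβ.swap)) hβd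
  have h0 := congrFun (congrFun hγd ∅) ∅
  rw [hγ rfl, map_zero, alternating_zero_right] at h0
  simp [boxSwap_apply, e, CharTwo.add_self_eq_zero] at h0

end Lovasz

section UnorderedChains

variable {V : Type} [DecidableEq V] (K : Cplx V)

/-- The coefficient at the unordered simplex `ρ` of the unordered chain underlying an ordered
chain. For `ρ` with `n + 1` vertices, degenerate simplices do not contribute. -/
noncomputable def unorderedCoeff (n : ℕ) (ρ : Finset V) :
    (Smpx K n →₀ ZMod 2) →ₗ[ZMod 2] ZMod 2 :=
  Finsupp.linearCombination (ZMod 2) fun f =>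
    if Finset.image f.1 Finset.univ = ρ then 1 else 0

variable {K}

theorem unorderedCoeff_single {n : ℕ} (ρ : Finset V) (f : Smpx K n) :
    unorderedCoeff K n ρ (Finsupp.single f 1) =
      if Finset.image f.1 Finset.univ = ρ then 1 else 0 := by
  simp [unorderedCoeff]

theorem faces_of_unorderedCoeff_ne_zero {n : ℕ} {ρ : Finset V} {c : Smpx K n →₀ ZMod 2}
    (h : unorderedCoeff K n ρ c ≠ 0) : K.faces ρ := by
  rw [unorderedCoeff, Finsupp.linearCombination_apply] at h
  obtain ⟨f, -, hf⟩ := Finset.exists_ne_zero_of_sum_ne_zero h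
  have : Finset.image f.1 Finset.univ = ρ := by
    by_contra hne
    simp [hne] at hf
  exact this ▸ f.2

theorem image_comp_succAbove {n : ℕ} {f : Fin (n + 2) → V} (hf : Function.Injective f)
    (i : Fin (n + 2)) :
    Finset.image (f ∘ i.succAbove) Finset.univ = (Finset.image f Finset.univ).erase (f i) := by
  ext x
  simp only [Finset.mem_image, Finset.mem_univ, true_and, Function.comp_apply, Finset.mem_erase]
  constructor
  · rintro ⟨j, rfl⟩
    exact ⟨fun h => Fin.succAbove_ne i j (hf h), _, rfl⟩
  · rintro ⟨hne, j, rfl⟩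
    obtain ⟨k, rfl⟩ := Fin.exists_succAbove_eq fun h : j = i => hne (congrArg f h)
    exact ⟨k, rfl⟩

theorem injective_of_card_image {n : ℕ} {g : Fin n → V}
    (h : (Finset.image g Finset.univ).card = n) : Function.Injective g := by
  have := Finset.card_image_iff.mp (h.trans (Finset.card_fin n).symm)
  exact fun a b hab => this (by simp) (by simp) hab

theorem sum_image_succAbove_eq [Fintype V] {n : ℕ} {ρ : Finset V} (hρ : ρ.card = n + 1)
    (f : Fin (n + 2) → V) :
    (∑ i : Fin (n + 2), if Finset.image (f ∘ i.succAbove) Finset.univ = ρ then (1 : ZMod 2) else 0)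
      = ∑ v ∈ ρᶜ, if Finset.image f Finset.univ = insert v ρ then 1 else 0 := by
  by_cases hf : Function.Injective f
  · have hcond : ∀ i : Fin (n + 2), Finset.image (f ∘ i.succAbove) Finset.univ = ρ ↔
        f i ∈ ρᶜ ∧ Finset.image f Finset.univ = insert (f i) ρ := by
      intro i
      have hi : f i ∈ Finset.image f Finset.univ := Finset.mem_image_of_mem f (Finset.mem_univ i)
      rw [image_comp_succAbove hf, Finset.mem_compl]
      constructor
      · rintro rfl
        exact ⟨Finset.notMem_erase _ _, (Finset.insert_erase hi).symm⟩
      · rintro ⟨h1, h2⟩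
        rw [h2, Finset.erase_insert h1]
    simp only [hcond, ite_and]
    rw [← Finset.sum_image (s := Finset.univ) (g := f)
      (f := fun v => if v ∈ ρᶜ then
        if Finset.image f Finset.univ = insert v ρ then (1 : ZMod 2) else 0 else 0)
      (fun a _ b _ hab => hf hab), ← Finset.sum_filter]
    refine Finset.sum_subset_zero_on_sdiff (fun v hv => (Finset.mem_filter.mp hv).2) ?_
      (fun _ _ => rfl)
    intro v hv
    simp only [Finset.mem_sdiff, Finset.mem_filter, not_and'] at hv
    refine if_neg fun h => hv.2 hv.1 ?_
    rw [h]
    exact Finset.mem_insert_self v ρ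
  · have hright : ∀ v ∈ ρᶜ, (if Finset.image f Finset.univ = insert v ρ then (1 : ZMod 2) else 0)
        = 0 := by
      intro v hv
      refine if_neg fun h => hf (injective_of_card_image ?_)
      rw [h, Finset.card_insert_of_notMem (Finset.mem_compl.mp hv), hρ]
    rw [Finset.sum_eq_zero hright]
    by_cases hex : ∃ i : Fin (n + 2), Finset.image (f ∘ i.succAbove) Finset.univ = ρ
    swap
    · exact Finset.sum_eq_zero fun i _ => if_neg fun h => hex ⟨i, h⟩
    obtain ⟨i, hi⟩ := hex
    have hinj : ∀ k : Fin (n + 2), Finset.image (f ∘ k.succAbove) Finset.univ = ρ →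
        ∀ a b, a ≠ k → b ≠ k → f a = f b → a = b := by
      intro k hk a b ha hb hab
      obtain ⟨a, rfl⟩ := Fin.exists_succAbove_eq ha
      obtain ⟨b, rfl⟩ := Fin.exists_succAbove_eq hb
      have : Function.Injective (f ∘ k.succAbove) := injective_of_card_image (hk ▸ hρ)
      rw [this hab]
    obtain ⟨j, hji, hfj⟩ : ∃ j, j ≠ i ∧ f j = f i := by
      by_contra! hne
      refine hf fun a b hab => ?_
      by_cases ha : a = i
      · by_contra hba
        exact hne b (fun h => hba (ha.trans h.symm)) (ha ▸ hab.symm)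
      · by_cases hb : b = i
        · exact absurd (hb ▸ hab) (hne a ha)
        · exact hinj i hi a b ha hb hab
    have himage : ∀ k l : Fin (n + 2), l ≠ k → f l = f k →
        Finset.image (f ∘ k.succAbove) Finset.univ = Finset.image f Finset.univ := by
      intro k l hlk hfl
      ext x
      simp only [Finset.mem_image, Finset.mem_univ, true_and, Function.comp_apply]
      constructor
      · rintro ⟨a, rfl⟩
        exact ⟨_, rfl⟩
      · rintro ⟨a, rfl⟩
        by_cases ha : a = k
        · obtain ⟨b, rfl⟩ := Fin.exists_succAbove_eq hlk
          exact ⟨b, ha ▸ hfl⟩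
        · obtain ⟨b, rfl⟩ := Fin.exists_succAbove_eq ha
          exact ⟨b, rfl⟩
    have hj : Finset.image (f ∘ j.succAbove) Finset.univ = ρ := by
      rw [himage j i hji.symm hfj.symm, ← himage i j hji hfj, hi]
    rw [Finset.sum_eq_add_of_mem i j (Finset.mem_univ _) (Finset.mem_univ _) hji.symm]
    · rw [if_pos hi, if_pos hj, CharTwo.add_self_eq_zero]
    · rintro k - ⟨hki, hkj⟩
      exact if_neg fun hk => hji (hinj k hk j i (Ne.symm hkj) (Ne.symm hki) hfj)

theorem unorderedCoeff_bdry [Fintype V] {n : ℕ} {ρ : Finset V} (hρ : ρ.card = n + 1)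
    (c : Smpx K (n + 1) →₀ ZMod 2) :
    unorderedCoeff K n ρ (bdry K (ZMod 2) n c) =
      ∑ v ∈ ρᶜ, unorderedCoeff K (n + 1) (insert v ρ) c := by
  induction c using Finsupp.induction_linear with
  | zero => simp
  | add f g hf hg => simp only [map_add, hf, hg, Finset.sum_add_distrib]
  | single f a =>
    rw [← mul_one a, ← smul_eq_mul, ← Finsupp.smul_single]
    simp only [map_smul, ← Finset.smul_sum, unorderedCoeff_single]
    rw [← sum_image_succAbove_eq hρ f.1]
    congr 1
    simp only [bdry, Finsupp.linearCombination_single, one_smul, map_sum,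
      unorderedCoeff_single, CharTwo.neg_eq, one_pow]
    rfl

theorem aug_eq_sum_unorderedCoeff [Fintype V] (c : Smpx K 0 →₀ ZMod 2) :
    aug K (ZMod 2) c = Finsupp.single () (∑ v, unorderedCoeff K 0 {v} c) := by
  induction c using Finsupp.induction_linear with
  | zero => simp
  | add f g hf hg => simp only [map_add, hf, hg, Finset.sum_add_distrib, Finsupp.single_add]
  | single f a =>
    rw [← mul_one a, ← smul_eq_mul, ← Finsupp.smul_single]
    simp only [map_smul, ← Finset.smul_sum, unorderedCoeff_single]
    simp [aug]

/-- The ordered simplices whose vertices are increasing with respect to an enumeration of `V`. -/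
def increasingSmpx [Fintype V] (K : Cplx V) (n : ℕ) : Set (Smpx K n) :=
  {f | StrictMono (Fintype.equivFin V ∘ f.1)}

theorem increasingSmpx_ext [Fintype V] {n : ℕ} {f g : Smpx K n} (hf : f ∈ increasingSmpx K n)
    (hg : g ∈ increasingSmpx K n)
    (h : Finset.image f.1 Finset.univ = Finset.image g.1 Finset.univ) : f = g := by
  have h1 : Set.range (Fintype.equivFin V ∘ f.1) = Set.range (Fintype.equivFin V ∘ g.1) := by
    rw [Set.range_comp, Set.range_comp]
    congr 1
    have := congrArg (fun s : Finset V => (s : Set V)) h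
    simpa using this
  have h2 := (StrictMono.range_inj hf hg).mp h1
  exact Subtype.ext (funext fun i => (Fintype.equivFin V).injective (congrFun h2 i))

theorem exists_increasingSmpx [Fintype V] {n : ℕ} {ρ : Finset V} (hρ : K.faces ρ)
    (hcard : ρ.card = n + 1) :
    ∃ f ∈ increasingSmpx K n, Finset.image f.1 Finset.univ = ρ := by
  have hc : (ρ.map (Fintype.equivFin V).toEmbedding).card = n + 1 := by rw [Finset.card_map, hcard]
  let o := (ρ.map (Fintype.equivFin V).toEmbedding).orderEmbOfFin hc
  have him : Finset.image ((Fintype.equivFin V).symm ∘ o) Finset.univ = ρ := by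
    rw [← Finset.image_image, Finset.image_orderEmbOfFin_univ]
    rw [Finset.map_eq_image, Finset.image_image]
    simp
  refine ⟨⟨(Fintype.equivFin V).symm ∘ o, him.symm ▸ hρ⟩, ?_, him⟩
  intro a b hab
  simpa using o.strictMono hab

theorem unorderedCoeff_image [Fintype V] {n : ℕ} {c : Smpx K n →₀ ZMod 2}
    (hc : c ∈ Finsupp.supported (ZMod 2) (ZMod 2) (increasingSmpx K n)) {g : Smpx K n}
    (hg : g ∈ increasingSmpx K n) :
    unorderedCoeff K n (Finset.image g.1 Finset.univ) c = c g := by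
  classical
  rw [unorderedCoeff, Finsupp.linearCombination_apply, Finsupp.sum, Finset.sum_eq_single g]
  · simp
  · intro f hf hfg
    rw [if_neg fun h => hfg (increasingSmpx_ext (hc hf) hg h), smul_zero]
  · intro h
    rw [Finsupp.notMem_support_iff.mp h, zero_smul]

theorem bdry_mem_supported [Fintype V] {n : ℕ} {c : Smpx K (n + 1) →₀ ZMod 2}
    (hc : c ∈ Finsupp.supported (ZMod 2) (ZMod 2) (increasingSmpx K (n + 1))) :
    bdry K (ZMod 2) n c ∈ Finsupp.supported (ZMod 2) (ZMod 2) (increasingSmpx K n) := by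
  rw [bdry, Finsupp.linearCombination_apply]
  refine Submodule.sum_mem _ fun f hf => Submodule.smul_mem _ _ (Submodule.sum_mem _ fun i _ =>
    Submodule.smul_mem _ _ (Finsupp.single_mem_supported _ _ ?_))
  have hmono : StrictMono (Fintype.equivFin V ∘ f.1) := hc hf
  exact hmono.comp (Fin.strictMono_succAbove i)

theorem eq_zero_of_unorderedCoeff [Fintype V] {n : ℕ} {c : Smpx K n →₀ ZMod 2}
    (hc : c ∈ Finsupp.supported (ZMod 2) (ZMod 2) (increasingSmpx K n))
    (h : ∀ ρ : Finset V, ρ.card = n + 1 → unorderedCoeff K n ρ c = 0) : c = 0 := by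
  ext g
  by_cases hg : g ∈ increasingSmpx K n
  · rw [← unorderedCoeff_image hc hg]
    refine h _ ?_
    rw [Finset.card_image_of_injective _ (Function.Injective.of_comp (StrictMono.injective hg)),
      Finset.card_fin]
  · exact (Finsupp.mem_supported' _ _).mp hc g hg

theorem exists_ordered_lift [Fintype V] {n : ℕ} {y : Finset V → ZMod 2}
    (hy : ∀ ρ, y ρ ≠ 0 → K.faces ρ) :
    ∃ c ∈ Finsupp.supported (ZMod 2) (ZMod 2) (increasingSmpx K n),
      ∀ ρ : Finset V, ρ.card = n + 1 → unorderedCoeff K n ρ c = y ρ := by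
  classical
  have : Finite (Smpx K n) := Subtype.finite
  let c : Smpx K n →₀ ZMod 2 := Finsupp.equivFunOnFinite.symm fun f =>
    if f ∈ increasingSmpx K n then y (Finset.image f.1 Finset.univ) else 0
  have hc : c ∈ Finsupp.supported (ZMod 2) (ZMod 2) (increasingSmpx K n) := by
    rw [Finsupp.mem_supported']
    intro f hf
    simp [c, hf]
  refine ⟨c, hc, fun ρ hρ => ?_⟩
  by_cases hface : K.faces ρ
  · obtain ⟨f, hf, rfl⟩ := exists_increasingSmpx hface hρ
    rw [unorderedCoeff_image hc hf]
    simp [c, hf]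
  · have h1 : y ρ = 0 := by
      by_contra h
      exact hface (hy ρ h)
    rw [h1]
    by_contra h
    exact hface (faces_of_unorderedCoeff_ne_zero h)

theorem exists_bdry_eq_of_subsingleton {n : ℕ}
    (h : Subsingleton (reducedHomology K (ZMod 2) (n : ℤ))) {c : Smpx K n →₀ ZMod 2}
    (hc : c ∈ cyc K (ZMod 2) n) : ∃ b, bdry K (ZMod 2) n b = c := by
  have htop := Submodule.Quotient.subsingleton_iff.mp h
  have hmem : (⟨c, hc⟩ : cyc K (ZMod 2) n) ∈ bsub K (ZMod 2) n := htop ▸ Submodule.mem_top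
  exact hmem

/-- Vanishing of reduced homology in terms of unordered simplicial chains. -/
theorem exists_unordered_bdry_eq [Fintype V] {s : ℕ}
    (h : Subsingleton (reducedHomology K (ZMod 2) ((s : ℤ) - 1))) {y : Finset V → ZMod 2}
    (hy : ∀ ρ, y ρ ≠ 0 → K.faces ρ ∧ ρ.card = s)
    (hcyc : ∀ ρ, ∑ v ∈ ρᶜ, y (insert v ρ) = 0) :
    ∃ w : Finset V → ZMod 2, (∀ ρ, w ρ ≠ 0 → K.faces ρ ∧ ρ.card = s + 1) ∧
      ∀ ρ, ∑ v ∈ ρᶜ, w (insert v ρ) = y ρ := by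
  classical
  cases s with
  | zero =>
    have h' : Subsingleton ((Unit →₀ ZMod 2) ⧸ LinearMap.range (aug K (ZMod 2))) := h
    have htop := Submodule.Quotient.subsingleton_iff.mp h'
    obtain ⟨b, hb⟩ : ∃ b, aug K (ZMod 2) b = Finsupp.single () (y ∅) :=
      LinearMap.mem_range.mp (htop ▸ Submodule.mem_top)
    rw [aug_eq_sum_unorderedCoeff] at hb
    have hb' := Finsupp.single_injective () hb
    refine ⟨fun ρ => if ρ.card = 1 then unorderedCoeff K 0 ρ b else 0, fun ρ hρ => ?_,
      fun ρ => ?_⟩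
    · simp only [ne_eq, ite_eq_right_iff, Classical.not_imp] at hρ
      exact ⟨faces_of_unorderedCoeff_ne_zero hρ.2, hρ.1⟩
    · by_cases hρ : ρ = ∅
      · subst hρ
        simpa using hb'
      · have h0 : y ρ = 0 := by
          by_contra hne
          exact hρ (Finset.card_eq_zero.mp (hy ρ hne).2)
        rw [h0]
        refine Finset.sum_eq_zero fun v hv => if_neg ?_
        rw [Finset.card_insert_of_notMem (Finset.mem_compl.mp hv)]
        simpa using hρ
  | succ n =>
    obtain ⟨c, hc, hcy⟩ := exists_ordered_lift (n := n) fun ρ hρ => (hy ρ hρ).1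
    have hins : ∀ {k : ℕ} {ρ : Finset V}, ρ.card = k → ∀ v ∈ ρᶜ, (insert v ρ).card = k + 1 :=
      fun hρ v hv => by rw [Finset.card_insert_of_notMem (Finset.mem_compl.mp hv), hρ]
    have hcc : c ∈ cyc K (ZMod 2) n := by
      cases n with
      | zero =>
        change aug K (ZMod 2) c = 0
        rw [aug_eq_sum_unorderedCoeff, Finset.sum_congr rfl fun v _ => hcy {v} rfl]
        have := hcyc ∅
        simp only [Finset.compl_empty, insert_empty_eq] at this
        rw [this, Finsupp.single_zero]
      | succ n =>
        change bdry K (ZMod 2) n c = 0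
        refine eq_zero_of_unorderedCoeff (bdry_mem_supported hc) fun ρ hρ => ?_
        rw [unorderedCoeff_bdry hρ, ← hcyc ρ]
        exact Finset.sum_congr rfl fun v hv => hcy _ (hins hρ v hv)
    have hn : ((n + 1 : ℕ) : ℤ) - 1 = (n : ℤ) := by push_cast; ring
    rw [hn] at h
    obtain ⟨b, hb⟩ := exists_bdry_eq_of_subsingleton h hcc
    refine ⟨fun ρ => if ρ.card = n + 2 then unorderedCoeff K (n + 1) ρ b else 0, fun ρ hρ => ?_,
      fun ρ => ?_⟩
    · simp only [ne_eq, ite_eq_right_iff, Classical.not_imp] at hρ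
      exact ⟨faces_of_unorderedCoeff_ne_zero hρ.2, hρ.1⟩
    · by_cases hρ : ρ.card = n + 1
      · rw [← hcy ρ hρ, ← hb, unorderedCoeff_bdry hρ]
        exact Finset.sum_congr rfl fun v hv => if_pos (hins hρ v hv)
      · have h0 : y ρ = 0 := by
          by_contra hne
          exact hρ (hy ρ hne).2
        rw [h0]
        refine Finset.sum_eq_zero fun v hv => if_neg fun hc' => hρ ?_
        rw [hins rfl v hv] at hc'
        omega

end UnorderedChains

section Dominance

variable {V : Type} [Fintype V] [DecidableEq V] (G : SimpleGraph V)

/-- The dominance complex of `G` is the combinatorial Alexander dual of the neighborhood complex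
of the complement of `G`. -/
theorem domCpx_faces_compl (σ : Finset V) :
    (domCpx G).faces σᶜ ↔ ¬ HasCommonNeighbor Gᶜ σ := by
  simp only [domCpx, HasCommonNeighbor, Finset.mem_compl, not_not, SimpleGraph.compl_adj]
  push Not
  refine forall_congr' fun v => exists_congr fun u => and_congr_right fun _ => ?_
  tauto

theorem relAcyclicAt_compl {t : ℕ} (ht : t ≤ Fintype.card V)
    (h : Subsingleton (reducedHomology (domCpx G) (ZMod 2) ((Fintype.card V : ℤ) - t - 1))) :
    RelAcyclicAt Gᶜ t := by
  intro z hz hzc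
  have hcard : ∀ ρ : Finset V, ρ.card + ρᶜ.card = Fintype.card V := Finset.card_add_card_compl
  have hdual : ∀ (g : Finset V → ZMod 2) (ρ : Finset V),
      ∑ v ∈ ρᶜ, g (insert v ρ)ᶜ = ∑ v ∈ ρᶜ, g (ρᶜ.erase v) := fun g ρ =>
    Finset.sum_congr rfl fun v _ => by rw [Finset.compl_insert]
  have hs : ((Fintype.card V - t : ℕ) : ℤ) - 1 = (Fintype.card V : ℤ) - t - 1 := by
    rw [Nat.cast_sub ht]
  rw [← hs] at h
  obtain ⟨w, hw, hwz⟩ := exists_unordered_bdry_eq h (y := fun ρ => z ρᶜ)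
    (fun ρ hρ => ⟨by
      have := (domCpx_faces_compl G ρᶜ).mpr (hz _ hρ).1
      rwa [compl_compl] at this, by
      have h1 := (hz _ hρ).2
      have h2 := hcard ρ
      omega⟩)
    (fun ρ => by rw [hdual, hzc])
  refine ⟨fun σ => w σᶜ, fun σ hσ => ⟨(domCpx_faces_compl G σ).mp (hw _ hσ).1, ?_⟩, fun σ => ?_⟩
  · have h1 := (hw _ hσ).2
    have h2 := hcard σ
    omega
  · have h1 := hwz σᶜ
    rw [compl_compl] at h1
    rw [← h1]
    exact Finset.sum_congr rfl fun v _ => congrArg w Finset.compl_erase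

theorem exists_nontrivial_reducedHomology {m : ℕ} (hm : m ≤ Fintype.card V)
    (hcol : Gᶜ.Colorable m) : ∃ i : ℤ, (Fintype.card V : ℤ) - m - 1 ≤ i ∧
      Nontrivial (reducedHomology (domCpx G) (ZMod 2) i) := by
  by_contra! h
  refine not_forall_relAcyclicAt hcol fun t ht => relAcyclicAt_compl G (ht.trans hm) ?_
  exact h _ (by omega)

end Dominance

/-- Theorem 1.2: if `G` is a graph with `n` vertices, then
`χ(Ḡ) ≥ n - hdim_{ℤ/2}(D(G)) - 2`. -/
theorem chromaticNumber_compl_ge {V : Type} [Fintype V] [DecidableEq V]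
    (G : SimpleGraph V) :
    ((Fintype.card V : ℝ) : EReal) - hdim (domCpx G) (ZMod 2) - 2 ≤
      ((Gᶜ.chromaticNumber : ℕ∞) : EReal) := by
  have hcard : Gᶜ.Colorable (Fintype.card V) := Gᶜ.colorable_of_fintype
  obtain ⟨m, hm⟩ := ENat.ne_top_iff_exists.mp
    (Gᶜ.chromaticNumber_ne_top_iff_exists.mpr ⟨_, hcard⟩)
  have hcol : Gᶜ.Colorable m := SimpleGraph.chromaticNumber_le_iff_colorable.mp hm.ge
  have hle : m ≤ Fintype.card V := by
    have := hcard.chromaticNumber_le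
    rw [← hm] at this
    exact_mod_cast this
  obtain ⟨i, hi, hnt⟩ := exists_nontrivial_reducedHomology G hle hcol
  have hdim_ge : ((i : ℝ) : EReal) ≤ hdim (domCpx G) (ZMod 2) := le_sSup ⟨i, rfl, hnt⟩
  rw [← hm]
  have hreal : (Fintype.card V : ℝ) - i - 2 ≤ m := by
    have : (Fintype.card V : ℝ) - m - 1 ≤ i := by exact_mod_cast hi
    linarith
  calc ((Fintype.card V : ℝ) : EReal) - hdim (domCpx G) (ZMod 2) - 2
      ≤ ((Fintype.card V : ℝ) : EReal) - ((i : ℝ) : EReal) - 2 :=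
        EReal.sub_le_sub (EReal.sub_le_sub le_rfl hdim_ge) le_rfl
    _ = (((Fintype.card V : ℝ) - i - 2 : ℝ) : EReal) := rfl
    _ ≤ ((m : ℝ) : EReal) := EReal.coe_le_coe_iff.mpr hreal
    _ = (((m : ℕ∞)) : EReal) := rfl
end

section
/- For every finite simple graph G, conn_{Z/2}(D(G)) + 2 ≤ τ(G), where Z/2 is the field with two elements. -/
open SimpleGraph

/-- The vertex cover number of a graph: the least size of a set of vertices
meeting every edge. -/
noncomputable def vcNum {V : Type} [Fintype V] (G : SimpleGraph V) : ℕ :=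
  sInf {k : ℕ | ∃ C : Finset V, (∀ ⦃u v : V⦄, G.Adj u v → u ∈ C ∨ v ∈ C) ∧ C.card = k}

/-! ### From ordered homology to unordered cochains -/

section Cochains

variable {V : Type} [DecidableEq V]

/-- The extension of a cochain on finite sets to ordered simplices, vanishing on the
degenerate ones. -/
noncomputable def orderedCochain (K : Cplx V) (φ : Finset V → ZMod 2) (n : ℕ) :
    (Smpx K n →₀ ZMod 2) →ₗ[ZMod 2] ZMod 2 :=
  Finsupp.linearCombination (ZMod 2) fun f =>
    if (Finset.image f.1 Finset.univ).card = n + 1 then φ (Finset.image f.1 Finset.univ) else 0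

lemma orderedCochain_single (K : Cplx V) (φ : Finset V → ZMod 2) (n : ℕ) (f : Smpx K n) :
    orderedCochain K φ n (Finsupp.single f 1) =
      if (Finset.image f.1 Finset.univ).card = n + 1 then
        φ (Finset.image f.1 Finset.univ) else 0 := by
  simp [orderedCochain]

lemma bdry_single_zmod_two (K : Cplx V) (n : ℕ) (f : Smpx K (n + 1)) :
    bdry K (ZMod 2) n (Finsupp.single f 1) =
      ∑ i : Fin (n + 2), Finsupp.single (Smpx.face K f i) (1 : ZMod 2) := by
  have h : (-1 : ZMod 2) = 1 := by decide
  simp [bdry, h]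

lemma image_face (K : Cplx V) {n : ℕ} (f : Smpx K (n + 1)) (i : Fin (n + 2)) :
    Finset.image (Smpx.face K f i).1 Finset.univ = Finset.image f.1 {i}ᶜ := by
  ext x
  simp only [Smpx.face, Finset.mem_image, Finset.mem_univ, true_and, Function.comp_apply,
    Finset.mem_compl, Finset.mem_singleton]
  constructor
  · rintro ⟨j, rfl⟩
    exact ⟨_, Fin.succAbove_ne i j, rfl⟩
  · rintro ⟨j, hj, rfl⟩
    obtain ⟨k, rfl⟩ := Fin.exists_succAbove_eq hj
    exact ⟨k, rfl⟩

lemma image_compl_singleton_of_injective {ι : Type} [Fintype ι] [DecidableEq ι] {f : ι → V}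
    (hf : Function.Injective f) (i : ι) :
    Finset.image f {i}ᶜ = (Finset.image f Finset.univ).erase (f i) := by
  ext x
  simp only [Finset.mem_image, Finset.mem_compl, Finset.mem_singleton, Finset.mem_erase,
    Finset.mem_univ, true_and]
  constructor
  · rintro ⟨j, hj, rfl⟩
    exact ⟨fun h => hj (hf h), j, rfl⟩
  · rintro ⟨hx, j, rfl⟩
    exact ⟨j, fun h => hx (by rw [h]), rfl⟩

lemma image_compl_singleton_of_eq {ι : Type} [Fintype ι] [DecidableEq ι] {f : ι → V} {a b : ι}
    (hab : a ≠ b) (h : f a = f b) :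
    Finset.image f {a}ᶜ = Finset.image f Finset.univ := by
  ext x
  simp only [Finset.mem_image, Finset.mem_compl, Finset.mem_singleton, Finset.mem_univ, true_and]
  constructor
  · rintro ⟨j, _, rfl⟩
    exact ⟨j, rfl⟩
  · rintro ⟨j, rfl⟩
    by_cases hj : j = a
    · exact ⟨b, hab.symm, by rw [hj, h]⟩
    · exact ⟨j, hj, rfl⟩

/-- An unordered cocycle modulo two extends to an ordered cocycle. -/
lemma orderedCochain_bdry (K : Cplx V) (φ : Finset V → ZMod 2) (n : ℕ)
    (hφ : ∀ ρ, K.faces ρ → ρ.card = n + 2 → ∑ x ∈ ρ, φ (ρ.erase x) = 0)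
    (c : Smpx K (n + 1) →₀ ZMod 2) : orderedCochain K φ n (bdry K (ZMod 2) n c) = 0 := by
  suffices h : orderedCochain K φ n ∘ₗ bdry K (ZMod 2) n = 0 from LinearMap.congr_fun h c
  refine Finsupp.lhom_ext' fun f => LinearMap.ext_ring ?_
  simp only [LinearMap.comp_apply, Finsupp.lsingle_apply, LinearMap.zero_apply]
  rw [bdry_single_zmod_two, map_sum]
  simp only [orderedCochain_single, image_face]
  by_cases hf : Function.Injective f.1
  · have hcard : (Finset.image f.1 Finset.univ).card = n + 2 := by
      rw [Finset.card_image_of_injective _ hf]; simp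
    have := hφ _ f.2 hcard
    rw [Finset.sum_image (fun _ _ _ _ h => hf h)] at this
    rw [← this]
    refine Finset.sum_congr rfl fun i _ => ?_
    rw [image_compl_singleton_of_injective hf, if_pos]
    rw [Finset.card_erase_of_mem (Finset.mem_image_of_mem _ (Finset.mem_univ _)), hcard]
    rfl
  · simp only [Function.Injective, not_forall] at hf
    obtain ⟨a, b, hfab, hab⟩ := hf
    rw [← Finset.sum_subset (Finset.subset_univ {a, b}), Finset.sum_pair hab,
      image_compl_singleton_of_eq hab hfab, image_compl_singleton_of_eq (Ne.symm hab) hfab.symm,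
      CharTwo.add_self_eq_zero]
    intro i _ hi
    simp only [Finset.mem_insert, Finset.mem_singleton, not_or] at hi
    refine if_neg fun hc => ?_
    have hsub : Finset.image f.1 {i}ᶜ ⊆ Finset.image f.1 ({i, a}ᶜ : Finset _) := by
      intro x hx
      simp only [Finset.mem_image, Finset.mem_compl, Finset.mem_insert,
        Finset.mem_singleton, not_or] at hx ⊢
      obtain ⟨j, hj, rfl⟩ := hx
      by_cases hja : j = a
      · exact ⟨b, ⟨fun h => hi.2 h.symm, fun h => hab h.symm⟩, by rw [hja, hfab]⟩
      · exact ⟨j, ⟨hj, hja⟩, rfl⟩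
    have h1 := (Finset.card_le_card hsub).trans Finset.card_image_le
    rw [hc, Finset.card_compl, Finset.card_pair hi.1] at h1
    simp at h1

lemma range_bdry_of_subsingleton (K : Cplx V) (n : ℕ)
    (h : Subsingleton (reducedHomology K (ZMod 2) (n : ℤ))) :
    cyc K (ZMod 2) n ≤ LinearMap.range (bdry K (ZMod 2) n) := by
  have h' : bsub K (ZMod 2) n = ⊤ := Submodule.Quotient.subsingleton_iff.1 h
  intro c hc
  have : (⟨c, hc⟩ : ↥(cyc K (ZMod 2) n)) ∈ bsub K (ZMod 2) n := by rw [h']; trivial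
  exact this

/-- A functional vanishing on the kernel of a linear map factors through the map. -/
lemma exists_comp_eq_of_ker_le {k M N : Type} [Field k] [AddCommGroup M] [Module k M]
    [AddCommGroup N] [Module k N] (g : M →ₗ[k] N) (φ : M →ₗ[k] k)
    (h : ∀ x, g x = 0 → φ x = 0) : ∃ ψ : N →ₗ[k] k, ∀ x, ψ (g x) = φ x := by
  have : φ ∈ LinearMap.range g.dualMap := by
    rw [LinearMap.range_dualMap_eq_dualAnnihilator_ker, Submodule.mem_dualAnnihilator]
    exact fun x hx => h x hx
  obtain ⟨ψ, hψ⟩ := this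
  exact ⟨ψ, fun x => by rw [← hψ]; rfl⟩

/-- Vanishing of reduced homology in degree `k - 1` makes every unordered cocycle on faces of
size `k` a coboundary. -/
lemma exists_coboundary_of_subsingleton [Fintype V] (K : Cplx V) (k : ℕ)
    (h : Subsingleton (reducedHomology K (ZMod 2) ((k : ℤ) - 1))) (φ : Finset V → ZMod 2)
    (hφ : ∀ ρ, K.faces ρ → ρ.card = k + 1 → ∑ x ∈ ρ, φ (ρ.erase x) = 0) :
    ∃ ψ : Finset V → ZMod 2,
      ∀ ρ, K.faces ρ → ρ.card = k → φ ρ = ∑ x ∈ ρ, ψ (ρ.erase x) := by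
  rcases k with _ | n
  · have h' : Subsingleton ((Unit →₀ ZMod 2) ⧸ LinearMap.range (aug K (ZMod 2))) := h
    rw [Submodule.Quotient.subsingleton_iff, LinearMap.range_eq_top] at h'
    have hne : Nonempty (Smpx K 0) := by
      by_contra hne
      rw [not_nonempty_iff] at hne
      obtain ⟨c, hc⟩ := h' (Finsupp.single () 1)
      rw [Subsingleton.elim c 0, map_zero] at hc
      simpa using DFunLike.congr_fun hc ()
    obtain ⟨f⟩ := hne
    have himg : Finset.image f.1 Finset.univ = {f.1 0} := by ext; simp
    have hf := f.2
    rw [himg] at hf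
    have := hφ _ hf (by simp)
    refine ⟨0, fun ρ _ hρ => ?_⟩
    rw [Finset.card_eq_zero] at hρ
    simpa [hρ] using this
  · have hcyc := range_bdry_of_subsingleton K n (by simpa using h)
    have hker : ∀ c ∈ cyc K (ZMod 2) n, orderedCochain K φ n c = 0 := by
      intro c hc
      obtain ⟨b, rfl⟩ := hcyc hc
      exact orderedCochain_bdry K φ n hφ b
    rcases n with _ | n
    · obtain ⟨ψ, hψ⟩ := exists_comp_eq_of_ker_le (aug K (ZMod 2)) (orderedCochain K φ 0) hker
      refine ⟨fun _ => ψ (Finsupp.single () 1), fun ρ hρ hc => ?_⟩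
      obtain ⟨v, rfl⟩ := Finset.card_eq_one.1 hc
      have himg : Finset.image (fun _ : Fin 1 => v) Finset.univ = {v} := by ext; simp [eq_comm]
      obtain ⟨f, hf⟩ : ∃ f : Smpx K 0, f.1 = fun _ => v := ⟨⟨_, by rw [himg]; exact hρ⟩, rfl⟩
      have := hψ (Finsupp.single f 1)
      rw [orderedCochain_single, hf, himg] at this
      simpa [aug] using this.symm
    · obtain ⟨ψ, hψ⟩ :=
        exists_comp_eq_of_ker_le (bdry K (ZMod 2) n) (orderedCochain K φ (n + 1)) hker
      let _ : LinearOrder V := LinearOrder.lift' (Fintype.equivFin V) (Fintype.equivFin V).injective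
      have himg : ∀ {m : ℕ} (σ : Finset V) (hσ : σ.card = m),
          Finset.image (σ.orderEmbOfFin hσ) Finset.univ = σ := by
        intro m σ hσ
        convert Finset.image_orderEmbOfFin_univ σ hσ
      classical
      refine ⟨fun σ => if hσ : K.faces σ ∧ σ.card = n + 1 then
        ψ (Finsupp.single ⟨σ.orderEmbOfFin hσ.2, by rw [himg]; exact hσ.1⟩ 1) else 0,
        fun ρ hρ hc => ?_⟩
      obtain ⟨f, hf⟩ : ∃ f : Smpx K (n + 1), f.1 = ρ.orderEmbOfFin hc :=
        ⟨⟨_, by rw [himg]; exact hρ⟩, rfl⟩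
      have key := hψ (Finsupp.single f 1)
      rw [orderedCochain_single, bdry_single_zmod_two, map_sum, hf, himg, if_pos hc] at key
      rw [← key]
      conv_rhs => rw [← himg ρ hc]
      rw [Finset.sum_image (fun _ _ _ _ h => (ρ.orderEmbOfFin hc).injective h)]
      simp only [himg]
      refine Finset.sum_congr rfl fun i _ => ?_
      have hmem := Finset.orderEmbOfFin_mem ρ hc i
      have hcard : (ρ.erase (ρ.orderEmbOfFin hc i)).card = n + 1 := by
        rw [Finset.card_erase_of_mem hmem, hc]; rfl
      rw [dif_pos ⟨K.down_closed (Finset.erase_subset _ _) hρ, hcard⟩]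
      congr 2
      refine Subtype.ext ?_
      change f.1 ∘ Fin.succAbove i = _
      rw [hf]
      refine Finset.orderEmbOfFin_unique hcard (fun j => ?_) ?_
      · exact Finset.mem_erase.2 ⟨fun h => Fin.succAbove_ne i j
          ((ρ.orderEmbOfFin hc).injective h), Finset.orderEmbOfFin_mem ρ hc _⟩
      · exact (ρ.orderEmbOfFin hc).strictMono.comp (Fin.strictMono_succAbove i)

end Cochains

/-! ### Chains on pairs of finite sets -/

section Support

variable {V : Type}

/-- The involution exchanging the two members of a pair. -/
def pairSwap (c : Finset V → Finset V → ZMod 2) (σ τ : Finset V) : ZMod 2 := c τ σ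

lemma pairSwap_add (c c' : Finset V → Finset V → ZMod 2) :
    pairSwap (c + c') = pairSwap c + pairSwap c' := rfl

lemma pairSwap_pairSwap (c : Finset V → Finset V → ZMod 2) : pairSwap (pairSwap c) = c := rfl

lemma pairSwap_add_pairSwap (y : Finset V → Finset V → ZMod 2) :
    pairSwap (y + pairSwap y) = y + pairSwap y := by
  rw [pairSwap_add, pairSwap_pairSwap, add_comm]

lemma add_self_chain (c : Finset V → Finset V → ZMod 2) : c + c = 0 := by
  funext σ τ
  exact CharTwo.add_self_eq_zero _

/-- `c` is supported on pairs `(σ, τ)` of total size `m` with `σ` and `τ` disjoint and without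
edges of `G` between them. -/
def IsPairChain (G : SimpleGraph V) (m : ℕ) (c : Finset V → Finset V → ZMod 2) : Prop :=
  ∀ σ τ, c σ τ ≠ 0 → σ.card + τ.card = m ∧ ∀ u ∈ σ, ∀ v ∈ τ, u ≠ v ∧ ¬ G.Adj u v

variable {G : SimpleGraph V} {m : ℕ} {c c' : Finset V → Finset V → ZMod 2}

lemma IsPairChain.add (h : IsPairChain G m c) (h' : IsPairChain G m c') :
    IsPairChain G m (c + c') := by
  intro σ τ hne
  by_cases hc : c σ τ = 0
  · exact h' σ τ fun hc' => hne (by simp [hc, hc'])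
  · exact h σ τ hc

lemma IsPairChain.pairSwap (h : IsPairChain G m c) : IsPairChain G m (pairSwap c) := by
  intro σ τ hne
  obtain ⟨h1, h2⟩ := h τ σ hne
  exact ⟨by omega, fun u hu v hv =>
    ⟨(h2 v hv u hu).1.symm, fun ha => (h2 v hv u hu).2 ha.symm⟩⟩

/-- The involution acts freely on nonempty pairs, so that invariant chains are symmetrizations. -/
lemma IsPairChain.exists_eq_add_pairSwap [Fintype V]
    (h : IsPairChain G (m + 1) c)
    (hinv : _root_.pairSwap c = c) :
    ∃ w, IsPairChain G (m + 1) w ∧ c = w + _root_.pairSwap w := by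
  let e := Fintype.equivFin (Finset V)
  refine ⟨fun σ τ => if e σ < e τ then c σ τ else 0, fun σ τ hne => ?_, ?_⟩
  · exact h σ τ fun h0 => hne (by simp [h0])
  · funext σ τ
    have hs : c τ σ = c σ τ := congrFun (congrFun hinv σ) τ
    simp only [Pi.add_apply, _root_.pairSwap]
    rcases lt_trichotomy (e σ) (e τ) with hlt | heq | hlt
    · rw [if_pos hlt, if_neg hlt.not_gt, add_zero]
    · have hst : σ = τ := e.injective heq
      subst hst
      rw [if_neg (lt_irrefl _), add_zero]
      by_contra hne
      obtain ⟨h1, h2⟩ := h _ _ hne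
      obtain ⟨x, hx⟩ : σ.Nonempty := Finset.card_pos.1 (by omega)
      exact (h2 x hx x hx).1 rfl
    · rw [if_neg hlt.not_gt, if_pos hlt, zero_add, hs]

end Support

section PairChains

variable {V : Type} [Fintype V] [DecidableEq V] {G : SimpleGraph V} {m : ℕ}
  {c : Finset V → Finset V → ZMod 2}

/-- The boundary modulo two of a chain on finite sets. -/
def finsetBdry (F : Finset V → ZMod 2) (σ : Finset V) : ZMod 2 := ∑ x ∈ σᶜ, F (insert x σ)

lemma finsetBdry_finsetBdry (F : Finset V → ZMod 2) : finsetBdry (finsetBdry F) = 0 := by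
  funext σ
  simp only [finsetBdry, Pi.zero_apply]
  rw [Finset.sum_sigma']
  refine Finset.sum_involution (fun p _ => ⟨p.2, p.1⟩) ?_ ?_ ?_ ?_
  · rintro ⟨x, y⟩ _
    simp only [Finset.insert_comm y x σ]
    exact CharTwo.add_self_eq_zero _
  · rintro ⟨x, y⟩ h _ heq
    simp only [Finset.mem_sigma, Finset.mem_compl, Finset.mem_insert, not_or] at h
    simp only [Sigma.mk.injEq] at heq
    exact h.2.1 heq.1
  · rintro ⟨x, y⟩ h
    simp only [Finset.mem_sigma, Finset.mem_compl, Finset.mem_insert, not_or] at h ⊢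
    exact ⟨h.2.2, Ne.symm h.2.1, h.1⟩
  · rintro ⟨x, y⟩ _
    rfl

/-- The cone with apex `p` over a chain on finite sets. -/
def finsetCone (p : V) (F : Finset V → ZMod 2) (σ : Finset V) : ZMod 2 :=
  if p ∈ σ then F (σ.erase p) else 0

lemma finsetBdry_finsetCone (p : V) (F : Finset V → ZMod 2) (σ : Finset V) :
    finsetBdry (finsetCone p F) σ = F σ + finsetCone p (finsetBdry F) σ := by
  by_cases hp : p ∈ σ
  · have hc : (σ.erase p)ᶜ = insert p σᶜ := by
      ext x; by_cases hx : x = p <;> simp [hx]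
    simp only [finsetBdry, finsetCone, hp, if_true, Finset.mem_insert, or_true]
    rw [hc, Finset.sum_insert (by simpa using hp), Finset.insert_erase hp, ← add_assoc,
      CharTwo.add_self_eq_zero, zero_add]
    refine Finset.sum_congr rfl fun x hx => ?_
    rw [Finset.erase_insert_of_ne]
    rintro rfl
    exact (Finset.mem_compl.1 hx) hp
  · simp only [finsetBdry, finsetCone, hp, if_false, add_zero]
    rw [Finset.sum_eq_single p]
    · simp [Finset.erase_insert hp]
    · intro x _ hx
      simp [hp, Ne.symm hx]
    · intro h
      exact absurd (Finset.mem_compl.2 hp) h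

/-- The boundary modulo two of a chain on pairs of finite sets. -/
def pairBdry (c : Finset V → Finset V → ZMod 2) (σ τ : Finset V) : ZMod 2 :=
  finsetBdry (fun σ' => c σ' τ) σ + finsetBdry (c σ) τ

lemma pairBdry_add (c c' : Finset V → Finset V → ZMod 2) :
    pairBdry (c + c') = pairBdry c + pairBdry c' := by
  funext σ τ
  simp only [pairBdry, finsetBdry, Pi.add_apply, Finset.sum_add_distrib]
  ring

lemma pairBdry_zero : pairBdry (0 : Finset V → Finset V → ZMod 2) = 0 := by
  funext σ τ
  simp [pairBdry, finsetBdry]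

lemma pairBdry_pairBdry (c : Finset V → Finset V → ZMod 2) : pairBdry (pairBdry c) = 0 := by
  funext σ τ
  have h1 := congrFun (finsetBdry_finsetBdry fun σ' => c σ' τ) σ
  have h2 := congrFun (finsetBdry_finsetBdry (c σ)) τ
  have h3 : ∑ x ∈ σᶜ, ∑ y ∈ τᶜ, c (insert x σ) (insert y τ) =
      ∑ y ∈ τᶜ, ∑ x ∈ σᶜ, c (insert x σ) (insert y τ) := Finset.sum_comm
  simp only [finsetBdry, Pi.zero_apply] at h1 h2
  simp only [pairBdry, finsetBdry, Finset.sum_add_distrib, Pi.zero_apply]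
  rw [h1, h2, h3, zero_add, add_zero, CharTwo.add_self_eq_zero]

lemma pairBdry_pairSwap (c : Finset V → Finset V → ZMod 2) :
    pairBdry (pairSwap c) = pairSwap (pairBdry c) := by
  funext σ τ
  exact add_comm _ _

/-- The cone with apex `p`, placed in the first member, over a chain on pairs. -/
def pairCone (p : V) (c : Finset V → Finset V → ZMod 2) (σ τ : Finset V) : ZMod 2 :=
  finsetCone p (fun σ' => c σ' τ) σ

lemma pairBdry_pairCone (p : V) (c : Finset V → Finset V → ZMod 2) :
    pairBdry (pairCone p c) = c + pairCone p (pairBdry c) := by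
  funext σ τ
  have h := finsetBdry_finsetCone p (fun σ' => c σ' τ) σ
  simp only [pairBdry, pairCone, Pi.add_apply]
  rw [h, add_assoc]
  congr 1
  by_cases hp : p ∈ σ <;> simp [pairCone, finsetCone, finsetBdry, hp]

lemma IsPairChain.pairBdry (h : IsPairChain G (m + 1) c) : IsPairChain G m (pairBdry c) := by
  intro σ τ hne
  by_cases h1 : finsetBdry (fun σ' => c σ' τ) σ = 0
  · have h2 : finsetBdry (c σ) τ ≠ 0 := fun h2 => hne (by simp [_root_.pairBdry, h1, h2])
    obtain ⟨x, hx, hxc⟩ := Finset.exists_ne_zero_of_sum_ne_zero h2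
    obtain ⟨h3, h4⟩ := h _ _ hxc
    rw [Finset.card_insert_of_notMem (Finset.mem_compl.1 hx)] at h3
    exact ⟨by omega, fun u hu v hv => h4 u hu v (Finset.mem_insert_of_mem hv)⟩
  · obtain ⟨x, hx, hxc⟩ := Finset.exists_ne_zero_of_sum_ne_zero h1
    obtain ⟨h3, h4⟩ := h _ _ hxc
    rw [Finset.card_insert_of_notMem (Finset.mem_compl.1 hx)] at h3
    exact ⟨by omega, fun u hu v hv => h4 u (Finset.mem_insert_of_mem hu) v hv⟩

/-- `s` is the symmetrization of a boundary of chains of size `m + 1`. -/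
def IsSymmBdry (G : SimpleGraph V) (m : ℕ) (s : Finset V → Finset V → ZMod 2) : Prop :=
  ∃ x, IsPairChain G (m + 1) x ∧ s = pairBdry x + pairSwap (pairBdry x)

/-- If the symmetrization of `y` is a symmetrized boundary, so is the boundary of `y`. -/
lemma IsSymmBdry.pairBdry {y : Finset V → Finset V → ZMod 2} (hy : IsPairChain G (m + 1) y)
    (h : IsSymmBdry G (m + 1) (y + pairSwap y)) : IsSymmBdry G m (pairBdry y) := by
  obtain ⟨x, hx, hyx⟩ := h
  have hinv : pairSwap (y + _root_.pairBdry x) = y + _root_.pairBdry x := by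
    funext σ τ
    have := congrFun (congrFun hyx σ) τ
    simp only [Pi.add_apply, pairSwap] at this ⊢
    grind
  obtain ⟨w, hw, hyw⟩ := (hy.add hx.pairBdry).exists_eq_add_pairSwap hinv
  refine ⟨w, hw, ?_⟩
  have := congrArg _root_.pairBdry hyw
  rwa [pairBdry_add, pairBdry_pairBdry, add_zero, pairBdry_add, pairBdry_pairSwap] at this

/-- The symmetrization of `y` is an invariant cycle if the boundary of `y` is invariant. -/
lemma pairBdry_add_pairSwap {y : Finset V → Finset V → ZMod 2}
    (h : pairSwap (pairBdry y) = pairBdry y) : pairBdry (y + pairSwap y) = 0 := by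
  rw [pairBdry_add, pairBdry_pairSwap, h, add_self_chain]

/-- If cycles of size at least `a` are boundaries, then invariant cycles of size at least `a`
are symmetrized boundaries. -/
lemma isSymmBdry_of_exact {a : ℕ}
    (hex : ∀ m, a ≤ m → ∀ c, IsPairChain G m c → pairBdry c = 0 →
      ∃ y, IsPairChain G (m + 1) y ∧ pairBdry y = c) :
    ∀ k m, a ≤ m → 2 * Fintype.card V < m + k → ∀ s, IsPairChain G m s → pairSwap s = s →
      pairBdry s = 0 → IsSymmBdry G m s := by
  intro k
  induction k with
  | zero =>
    intro m _ hm s hs _ _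
    refine ⟨0, fun σ τ h => absurd rfl h, ?_⟩
    rw [pairBdry_zero]
    funext σ τ
    by_contra hne
    have h1 := (hs σ τ fun h0 => hne (by simp [h0, pairSwap])).1
    have h2 := Finset.card_le_univ σ
    have h3 := Finset.card_le_univ τ
    omega
  | succ k ih =>
    intro m ha hm s hs hinv hcyc
    obtain ⟨y, hy, rfl⟩ := hex m ha s hs hcyc
    exact IsSymmBdry.pairBdry hy (ih (m + 1) (by omega) (by omega) _ (hy.add hy.pairSwap)
      (pairSwap_add_pairSwap y) (pairBdry_add_pairSwap hinv))

/-- Invariant cycles of size `|J|` supported on pairs of disjoint subsets of `J`, for `J` a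
subset of an independent set `I`, are symmetrized boundaries. -/
lemma isSymmBdry_of_subset_indep {I : Finset V} (hI : ∀ u ∈ I, ∀ v ∈ I, ¬ G.Adj u v)
    (htop : ∀ s, IsPairChain G I.card s → pairSwap s = s → pairBdry s = 0 →
      IsSymmBdry G I.card s) :
    ∀ k, ∀ J ⊆ I, J.card + k = I.card → ∀ s, IsPairChain G J.card s →
      (∀ σ τ, s σ τ ≠ 0 → σ ⊆ J ∧ τ ⊆ J) → pairSwap s = s → pairBdry s = 0 →
      IsSymmBdry G J.card s := by
  intro k
  induction k with
  | zero =>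
    intro J hJ hk s hs _ hinv hcyc
    obtain rfl : J = I := Finset.eq_of_subset_of_card_le hJ (by omega)
    exact htop s hs hinv hcyc
  | succ k ih =>
    intro J hJ hk s hs hsJ hinv hcyc
    obtain ⟨v, hvI, hvJ⟩ : ∃ v ∈ I, v ∉ J := by
      by_contra! hcon
      have := Finset.card_le_card (show I ⊆ J from hcon)
      omega
    have hy : pairBdry (pairCone v s) = s := by
      rw [pairBdry_pairCone, hcyc]
      funext σ τ
      simp [pairCone, finsetCone]
    have hsupp : ∀ σ τ, pairCone v s σ τ ≠ 0 → v ∈ σ ∧ s (σ.erase v) τ ≠ 0 := by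
      intro σ τ hne
      by_cases hv : v ∈ σ
      · exact ⟨hv, by simpa [pairCone, finsetCone, hv] using hne⟩
      · simp [pairCone, finsetCone, hv] at hne
    have hsub : ∀ σ τ, pairCone v s σ τ ≠ 0 → σ ⊆ insert v J ∧ τ ⊆ insert v J := by
      intro σ τ hne
      obtain ⟨hv, hne'⟩ := hsupp σ τ hne
      obtain ⟨h1, h2⟩ := hsJ _ _ hne'
      refine ⟨?_, h2.trans (Finset.subset_insert _ _)⟩
      rw [← Finset.insert_erase hv]
      exact Finset.insert_subset_insert _ h1
    have hchain : IsPairChain G (J.card + 1) (pairCone v s) := by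
      intro σ τ hne
      obtain ⟨hv, hne'⟩ := hsupp σ τ hne
      obtain ⟨h1, h2⟩ := hs _ _ hne'
      obtain ⟨h3, h4⟩ := hsJ _ _ hne'
      have := Finset.card_erase_add_one hv
      refine ⟨by omega, fun u hu w hw => ?_⟩
      by_cases huv : u = v
      · subst huv
        exact ⟨fun h => hvJ (h ▸ h4 hw), hI u hvI w (hJ (h4 hw))⟩
      · exact h2 u (Finset.mem_erase.2 ⟨huv, hu⟩) w hw
    have hcard : (insert v J).card = J.card + 1 := Finset.card_insert_of_notMem hvJ
    have hnext := ih (insert v J) (Finset.insert_subset hvI hJ) (by omega)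
      (pairCone v s + pairSwap (pairCone v s))
      (by rw [hcard]; exact hchain.add hchain.pairSwap)
      (by
        intro σ τ hne
        by_cases h0 : pairCone v s σ τ = 0
        · exact (hsub τ σ fun h1 => hne (by simp [pairSwap, h0, h1])).symm
        · exact hsub σ τ h0)
      (pairSwap_add_pairSwap _) (pairBdry_add_pairSwap (by rw [hy, hinv]))
    rw [hcard] at hnext
    simpa only [hy] using IsSymmBdry.pairBdry hchain hnext

/-- Chains on pairs cannot be exact in all sizes from the size of an independent set on. -/
lemma not_exact_of_indep {I : Finset V} (hI : ∀ u ∈ I, ∀ v ∈ I, ¬ G.Adj u v)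
    (hex : ∀ m, I.card ≤ m → ∀ c, IsPairChain G m c → pairBdry c = 0 →
      ∃ y, IsPairChain G (m + 1) y ∧ pairBdry y = c) : False := by
  have hgood := isSymmBdry_of_subset_indep hI
    (fun s => isSymmBdry_of_exact hex (2 * Fintype.card V + 1) I.card le_rfl (by omega) s)
    I.card ∅ (Finset.empty_subset _) (by simp)
    (fun σ τ => if σ = ∅ ∧ τ = ∅ then 1 else 0)
    (by intro σ τ hne; simp at hne; simp [hne])
    (by intro σ τ hne; simp at hne; simp [hne])
    (by funext σ τ; simp [pairSwap, and_comm])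
    (by funext σ τ; simp [pairBdry, finsetBdry])
  obtain ⟨x, _, hx⟩ := hgood
  have := congrFun (congrFun hx ∅) ∅
  simp only [Pi.add_apply, pairSwap, CharTwo.add_self_eq_zero] at this
  simp at this

/-- A cycle supported on pairs whose second member is not dominating is a boundary. -/
lemma exists_pairBdry_eq_of_nondominating (p : Finset V → V) :
    ∀ t m c, IsPairChain G m c → pairBdry c = 0 →
      (∀ σ τ, c σ τ ≠ 0 → τ.card < t ∧
        ∀ τ' ⊆ τ, ∀ w ∈ τ', p τ' ≠ w ∧ ¬ G.Adj (p τ') w) →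
      ∃ y, IsPairChain G (m + 1) y ∧ pairBdry y = c := by
  intro t
  induction t with
  | zero =>
    intro m c _ _ hsupp
    refine ⟨0, fun σ τ h => absurd rfl h, ?_⟩
    rw [pairBdry_zero]
    funext σ τ
    by_contra hne
    exact absurd (hsupp σ τ (Ne.symm hne)).1 (by omega)
  | succ t ih =>
    intro m c hc hcyc hsupp
    let y : Finset V → Finset V → ZMod 2 := fun σ τ =>
      if τ.card = t then finsetCone (p τ) (fun σ' => c σ' τ) σ else 0
    have hysupp : ∀ σ τ, y σ τ ≠ 0 → τ.card = t ∧ p τ ∈ σ ∧ c (σ.erase (p τ)) τ ≠ 0 := by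
      intro σ τ hne
      by_cases h1 : τ.card = t
      · by_cases h2 : p τ ∈ σ
        · exact ⟨h1, h2, by simpa [y, finsetCone, h1, h2] using hne⟩
        · simp [y, finsetCone, h2] at hne
      · simp [y, h1] at hne
    have hy : IsPairChain G (m + 1) y := by
      intro σ τ hne
      obtain ⟨_, h2, h3⟩ := hysupp σ τ hne
      obtain ⟨h4, h5⟩ := hc _ _ h3
      have := Finset.card_erase_add_one h2
      refine ⟨by omega, fun u hu w hw => ?_⟩
      by_cases hu' : u = p τ
      · subst hu'
        exact (hsupp _ _ h3).2 τ subset_rfl w hw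
      · exact h5 u (Finset.mem_erase.2 ⟨hu', hu⟩) w hw
    have htop : ∀ σ τ, τ.card = t → pairBdry y σ τ = c σ τ := by
      intro σ τ hτ
      have hcol : ∀ σ', finsetBdry (fun σ'' => c σ'' τ) σ' = 0 := by
        intro σ'
        have h1 := congrFun (congrFun hcyc σ') τ
        have h2 : finsetBdry (c σ') τ = 0 := by
          refine Finset.sum_eq_zero fun x hx => ?_
          by_contra hne
          have := (hsupp _ _ hne).1
          rw [Finset.card_insert_of_notMem (Finset.mem_compl.1 hx)] at this
          omega
        simpa [pairBdry, h2] using h1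
      have h1 : finsetBdry (fun σ' => y σ' τ) σ = c σ τ := by
        have := finsetBdry_finsetCone (p τ) (fun σ' => c σ' τ) σ
        simp only [y, hτ, if_true]
        rw [show (fun σ' => finsetCone (p τ) (fun σ' => c σ' τ) σ') =
          finsetCone (p τ) (fun σ' => c σ' τ) from rfl, this]
        simp [finsetCone, hcol]
      have h2 : finsetBdry (y σ) τ = 0 := by
        refine Finset.sum_eq_zero fun x hx => ?_
        have : (insert x τ).card = t + 1 := by
          rw [Finset.card_insert_of_notMem (Finset.mem_compl.1 hx), hτ]
        simp [y, this]
      simp [pairBdry, h1, h2]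
    obtain ⟨y', hy', hy'c⟩ := ih m (c + pairBdry y) (hc.add hy.pairBdry)
      (by rw [pairBdry_add, hcyc, pairBdry_pairBdry, add_zero]) (by
        intro σ τ hne
        by_cases hτ : τ.card = t
        · exact absurd (by simp [htop σ τ hτ, CharTwo.add_self_eq_zero]) hne
        by_cases h0 : c σ τ = 0
        · have h1 : pairBdry y σ τ ≠ 0 := fun h1 => hne (by simp [h0, h1])
          have h2 : finsetBdry (fun σ' => y σ' τ) σ = 0 := by simp [finsetBdry, y, hτ]
          have h3 : finsetBdry (y σ) τ ≠ 0 := fun h3 => h1 (by simp [pairBdry, h2, h3])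
          obtain ⟨x, hx, hxy⟩ := Finset.exists_ne_zero_of_sum_ne_zero h3
          obtain ⟨h4, _, h5⟩ := hysupp _ _ hxy
          rw [Finset.card_insert_of_notMem (Finset.mem_compl.1 hx)] at h4
          exact ⟨by omega, fun τ' hτ' =>
            (hsupp _ _ h5).2 τ' (hτ'.trans (Finset.subset_insert _ _))⟩
        · obtain ⟨h1, h2⟩ := hsupp σ τ h0
          exact ⟨by omega, h2⟩)
    refine ⟨y' + y, hy'.add hy, ?_⟩
    rw [pairBdry_add, hy'c, add_assoc, add_self_chain, add_zero]

/-- Vanishing homology of the dominance complex makes cycles on pairs into boundaries. -/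
lemma exists_pairBdry_eq_of_subsingleton
    (h : m ≤ Fintype.card V →
      Subsingleton (reducedHomology (domCpx G) (ZMod 2) (((Fintype.card V - m : ℕ) : ℤ) - 1)))
    (hc : IsPairChain G m c) (hcyc : pairBdry c = 0) :
    ∃ y, IsPairChain G (m + 1) y ∧ pairBdry y = c := by
  classical
  have hdom : ∀ σ τ, (domCpx G).faces τᶜ → c σ τ ≠ 0 → σ = ∅ := by
    intro σ τ hτ hne
    by_contra hσ
    obtain ⟨v, hv⟩ := Finset.nonempty_iff_ne_empty.2 hσ
    obtain ⟨w, hw, hwv⟩ := hτ v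
    have hw' : w ∈ τ := by simpa using hw
    obtain ⟨h1, h2⟩ := (hc σ τ hne).2 v hv w hw'
    rcases hwv with rfl | hadj
    · exact h1 rfl
    · exact h2 hadj.symm
  obtain ⟨ψ, hψ⟩ : ∃ ψ : Finset V → ZMod 2, ∀ τ, (domCpx G).faces τᶜ → τ.card = m →
      c ∅ τ = ∑ x ∈ τᶜ, ψ (τᶜ.erase x) := by
    by_cases hm : m ≤ Fintype.card V
    · obtain ⟨ψ, hψ⟩ := exists_coboundary_of_subsingleton (domCpx G) _ (h hm) (fun ρ => c ∅ ρᶜ) (by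
        intro ρ hρ _
        have h1 := congrFun (congrFun hcyc ∅) ρᶜ
        have h2 : finsetBdry (fun σ' => c σ' ρᶜ) ∅ = 0 := by
          refine Finset.sum_eq_zero fun x _ => ?_
          by_contra hne
          exact absurd (hdom _ _ (by rwa [compl_compl]) hne) (by simp)
        rw [pairBdry, h2, zero_add, finsetBdry, compl_compl] at h1
        simpa [Finset.compl_erase] using h1)
      refine ⟨ψ, fun τ hτ hcard => ?_⟩
      have := hψ τᶜ hτ (by rw [Finset.card_compl, hcard])
      rwa [compl_compl] at this
    · refine ⟨0, fun τ _ hcard => ?_⟩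
      have := Finset.card_le_univ τ
      omega
  let y : Finset V → Finset V → ZMod 2 := fun σ τ =>
    if σ = ∅ ∧ τ.card = m + 1 ∧ (domCpx G).faces τᶜ then ψ τᶜ else 0
  have hy : IsPairChain G (m + 1) y := by
    intro σ τ hne
    by_cases h1 : σ = ∅ ∧ τ.card = m + 1 ∧ (domCpx G).faces τᶜ
    · obtain ⟨rfl, h2, _⟩ := h1
      simp [h2]
    · simp [y, h1] at hne
  have hdomzero : ∀ σ τ, (domCpx G).faces τᶜ → (c + pairBdry y) σ τ = 0 := by
    intro σ τ hτ
    have h1 : finsetBdry (fun σ' => y σ' τ) σ = 0 := by simp [finsetBdry, y]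
    by_cases hσ : σ = ∅
    · subst hσ
      by_cases hcard : τ.card = m
      · have h2 : finsetBdry (y ∅) τ = ∑ x ∈ τᶜ, ψ (τᶜ.erase x) := by
          refine Finset.sum_congr rfl fun x hx => ?_
          have h3 : (insert x τ).card = m + 1 := by
            rw [Finset.card_insert_of_notMem (Finset.mem_compl.1 hx), hcard]
          have h4 : (domCpx G).faces (insert x τ)ᶜ :=
            (domCpx G).down_closed
              (Finset.compl_subset_compl.2 (Finset.subset_insert x τ)) hτ
          rw [← Finset.compl_insert]
          exact if_pos ⟨rfl, h3, h4⟩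
        simp only [Pi.add_apply, pairBdry, h1, h2, zero_add, hψ τ hτ hcard,
          CharTwo.add_self_eq_zero]
      · by_contra hne
        have := ((hc.add hy.pairBdry) _ _ hne).1
        simp at this
        exact hcard this
    · have h2 : finsetBdry (y σ) τ = 0 := by simp [finsetBdry, y, hσ]
      have h3 : c σ τ = 0 := by
        by_contra hne
        exact hσ (hdom σ τ hτ hne)
      simp [pairBdry, h1, h2, h3]
  have hp : ∀ τ : Finset V, ¬ (domCpx G).faces τᶜ → ∃ v, ∀ w ∈ τ, v ≠ w ∧ ¬ G.Adj v w := by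
    intro τ hτ
    by_contra! hcon
    refine hτ fun v => ?_
    obtain ⟨w, hw, hvw⟩ := hcon v
    refine ⟨w, by simpa using hw, ?_⟩
    by_cases hwv : v = w
    · exact Or.inl hwv.symm
    · exact Or.inr (hvw hwv).symm
  by_cases hV : IsEmpty V
  · refine ⟨y, hy, ?_⟩
    funext σ τ
    have := hdomzero σ τ fun v => isEmptyElim v
    simp only [Pi.add_apply] at this
    exact (CharTwo.add_eq_zero.1 this).symm
  have hne : Nonempty V := not_isEmpty_iff.1 hV
  let p : Finset V → V := fun τ =>
    if hτ : ¬ (domCpx G).faces τᶜ then (hp τ hτ).choose else Classical.arbitrary V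
  obtain ⟨y', hy', hy'c⟩ := exists_pairBdry_eq_of_nondominating (G := G) p
    (Fintype.card V + 1) m (c + pairBdry y) (hc.add hy.pairBdry)
    (by rw [pairBdry_add, hcyc, pairBdry_pairBdry, add_zero])
    (by
      intro σ τ hne
      refine ⟨Nat.lt_succ_of_le (Finset.card_le_univ τ), fun τ' hτ' => ?_⟩
      have hnd : ¬ (domCpx G).faces τ'ᶜ := fun hf => hne (hdomzero σ τ
        ((domCpx G).down_closed (Finset.compl_subset_compl.2 hτ') hf))
      simp only [p, dif_pos hnd]
      exact (hp τ' hnd).choose_spec)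
  refine ⟨y' + y, hy'.add hy, ?_⟩
  rw [pairBdry_add, hy'c, add_assoc, add_self_chain, add_zero]

end PairChains

lemma exists_vertexCover_card_eq_vcNum {V : Type} [Fintype V] (G : SimpleGraph V) :
    ∃ C : Finset V, (∀ ⦃u v : V⦄, G.Adj u v → u ∈ C ∨ v ∈ C) ∧ C.card = vcNum G :=
  Nat.sInf_mem (s := {k : ℕ | ∃ C : Finset V,
    (∀ ⦃u v : V⦄, G.Adj u v → u ∈ C ∨ v ∈ C) ∧ C.card = k})
    ⟨_, Finset.univ, fun u _ _ => Or.inl (Finset.mem_univ u), rfl⟩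

/-- Theorem 4.3: for every finite simple graph `G`,
`conn_{ℤ/2}(D(G)) + 2 ≤ τ(G)`. -/
theorem conn_dominance_add_two_le_vertexCoverNum {V : Type} [Fintype V] [DecidableEq V]
    (G : SimpleGraph V) :
    conn (domCpx G) (ZMod 2) + 2 ≤ ((vcNum G : ℝ) : EReal) := by
  have hconn : conn (domCpx G) (ZMod 2) ≤ (((vcNum G : ℝ) - 2 : ℝ) : EReal) := by
    refine sSup_le ?_
    rintro _ ⟨n, rfl, hn⟩
    rw [EReal.coe_le_coe_iff]
    suffices h : n ≤ (vcNum G : ℤ) - 2 by exact_mod_cast h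
    by_contra! hlt
    obtain ⟨C, hC, hcard⟩ := exists_vertexCover_card_eq_vcNum G
    have hCle := Finset.card_le_univ C
    refine not_exact_of_indep (G := G) (I := Cᶜ) (fun u hu v hv hadj => ?_)
      (fun m hm c hc hcyc => exists_pairBdry_eq_of_subsingleton (fun hmV => hn _ ?_) hc hcyc)
    · rw [Finset.mem_compl] at hu hv
      exact (hC hadj).elim hu hv
    · rw [Finset.card_compl] at hm
      omega
  calc conn (domCpx G) (ZMod 2) + 2
      ≤ (((vcNum G : ℝ) - 2 : ℝ) : EReal) + ((2 : ℝ) : EReal) := add_le_add hconn le_rfl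
    _ = ((vcNum G : ℝ) : EReal) := by rw [← EReal.coe_add, sub_add_cancel]
end

section
/- Let G be a chordal graph. Then the neighborhood complex N(Ḡ) collapses to a subcomplex isomorphic to the neighborhood complex N(K_{α(G)}) of the complete graph on α(G) vertices (the boundary of the (α(G)−1)-simplex), which is homotopy equivalent to the sphere S^{α(G)−2}. -/
open SimpleGraph

/-- The neighborhood complex of a graph: the faces are the subsets of the vertex set
contained in the open neighborhood of some vertex. -/
def nbdCpx {V : Type} (G : SimpleGraph V) : Cplx V where
  faces σ := ∃ v : V, ∀ u ∈ σ, G.Adj v u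
  down_closed := by
    rintro σ τ hst ⟨v, h⟩
    exact ⟨v, fun u hu => h u (hst hu)⟩

/-- A facet of a simplicial complex is a maximal face. -/
def Cplx.IsFacet {V : Type} (K : Cplx V) (σ : Finset V) : Prop :=
  K.faces σ ∧ ∀ ⦃τ : Finset V⦄, K.faces τ → σ ⊆ τ → σ = τ

/-- A free face: a nonempty face that is not a facet and is contained in exactly
one facet. -/
def Cplx.IsFreeFace {V : Type} (K : Cplx V) (σ : Finset V) : Prop :=
  σ.Nonempty ∧ K.faces σ ∧ ¬ K.IsFacet σ ∧ ∃! τ : Finset V, K.IsFacet τ ∧ σ ⊆ τ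

/-- An elementary collapse: remove all faces containing some free face. -/
def CollapseStep {V : Type} (K L : Cplx V) : Prop :=
  ∃ σ : Finset V, K.IsFreeFace σ ∧ ∀ τ : Finset V, L.faces τ ↔ (K.faces τ ∧ ¬ σ ⊆ τ)

/-- `K` collapses to `L` if `L` is obtained from `K` by a finite sequence of
elementary collapses. -/
def Collapses {V : Type} (K L : Cplx V) : Prop := Relation.ReflTransGen CollapseStep K L

/-- A graph is chordal if it contains no induced cycle of length at least 4. -/
def IsChordal {V : Type} (G : SimpleGraph V) : Prop :=
  ∀ n : ℕ, 4 ≤ n → IsEmpty (cycleGraph n ↪g G)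

/-- The independence number of a graph: the largest size of an independent set. -/
noncomputable def indNum {V : Type} [Fintype V] (G : SimpleGraph V) : ℕ :=
  sSup {k : ℕ | ∃ s : Finset V, (∀ u ∈ s, ∀ v ∈ s, ¬ G.Adj u v) ∧ s.card = k}

open Classical in
/-- The geometric realization of a simplicial complex, as a subspace of `V → ℝ`. -/
def Cplx.space {V : Type} [Fintype V] (K : Cplx V) : Type :=
  {f : V → ℝ // (∑ v, f v = 1) ∧ (∀ v, 0 ≤ f v) ∧
    K.faces (Finset.univ.filter fun v => f v ≠ 0)}

instance {V : Type} [Fintype V] (K : Cplx V) : TopologicalSpace K.space :=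
  instTopologicalSpaceSubtype

section Chordal

variable {V : Type} {G : SimpleGraph V}

/-- The `i`-th vertex of a shortest walk lies at distance `i` from its start. -/
lemma dist_getVert_of_length_eq_dist {u v : V} (p : G.Walk u v) (hp : p.length = G.dist u v)
    {i : ℕ} (hi : i ≤ p.length) : G.dist u (p.getVert i) = i := by
  have h₁ : G.dist u (p.getVert i) ≤ i :=
    (dist_le (p.take i)).trans (by rw [Walk.take_length]; exact min_le_left _ _)
  have h₂ : G.dist (p.getVert i) v ≤ p.length - i :=
    (dist_le (p.drop i)).trans (by rw [Walk.drop_length])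
  have h₃ : G.dist u v ≤ G.dist u (p.getVert i) + G.dist (p.getVert i) v :=
    (p.take i).reachable.dist_triangle_left v
  omega

/-- In a chordal graph, two distinct neighbors of a vertex `b` that are joined by a path through
a connected set missing the closed neighborhood of `b` are adjacent. -/
lemma IsChordal.adj_of_preconnected (hch : IsChordal G) {A : Set V}
    (hA : (G.induce A).Preconnected) {x y b : V} (hbA : b ∉ A) (hb : ∀ a ∈ A, ¬ G.Adj b a)
    (hx : ∃ a ∈ A, G.Adj x a) (hy : ∃ a ∈ A, G.Adj y a) (hbx : G.Adj b x) (hby : G.Adj b y)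
    (hxy : x ≠ y) : G.Adj x y := by
  by_contra hnadj
  obtain ⟨a, haA, hxa⟩ := hx
  obtain ⟨a', haA', hya⟩ := hy
  have hsing (z : V) : (G.induce {z}).Preconnected := fun u v => by
    rw [Subsingleton.elim u v]
  have hAx : (G.induce (A ∪ {x})).Connected :=
    connected_induce_union hA (hsing x) haA rfl hxa.symm
  have hAxy : (G.induce (A ∪ {x} ∪ {y})).Connected :=
    connected_induce_union hAx.preconnected (hsing y) (Or.inl haA') rfl hya.symm
  set H := G.induce (A ∪ {x} ∪ {y})
  let x' : (A ∪ {x} ∪ {y} : Set V) := ⟨x, by simp⟩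
  let y' : (A ∪ {x} ∪ {y} : Set V) := ⟨y, by simp⟩
  obtain ⟨p, hp⟩ := hAxy.exists_walk_length_eq_dist x' y'
  have hne : x' ≠ y' := fun h => hxy (congrArg Subtype.val h)
  have hlen : 1 < p.length := by
    rw [hp]
    exact hAxy.one_lt_dist_of_ne_of_not_adj hne hnadj
  set k := p.length with hk
  let q : ℕ → V := fun i => (p.getVert i : V)
  have hdist {i : ℕ} (hi : i ≤ k) : H.dist x' (p.getVert i) = i :=
    dist_getVert_of_length_eq_dist p hp hi
  have hinj {i j : ℕ} (hi : i ≤ k) (hj : j ≤ k) (h : q i = q j) : i = j := by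
    rw [← hdist hi, ← hdist hj, Subtype.ext h]
  have hq0 : q 0 = x := by simp [q, x']
  have hqk : q k = y := by simp [q, hk, y']
  have hadj {i j : ℕ} (hi : i ≤ k) (hj : j ≤ k) : G.Adj (q i) (q j) ↔ i = j + 1 ∨ j = i + 1 := by
    constructor
    · intro h
      have h' : H.Adj (p.getVert i) (p.getVert j) := h
      have hij : i ≠ j := by
        rintro rfl
        exact h.ne rfl
      have := h'.diff_dist_adj (u := x')
      rw [hdist hi, hdist hj] at this
      omega
    · rintro (rfl | rfl)
      · exact (p.adj_getVert_succ (by omega)).symm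
      · exact p.adj_getVert_succ (by omega)
  have hmem {i : ℕ} (h0 : 0 < i) (hi : i < k) : q i ∈ A := by
    rcases (p.getVert i).2 with (h | h) | h
    · exact h
    · have := hinj hi.le (Nat.zero_le k) (h.trans hq0.symm)
      omega
    · have := hinj hi.le le_rfl (h.trans hqk.symm)
      omega
  have hbq {i : ℕ} (hi : i ≤ k) : G.Adj b (q i) ↔ i = 0 ∨ i = k := by
    constructor
    · intro h
      by_contra hcon
      exact hb _ (hmem (by omega) (by omega)) h
    · rintro (rfl | rfl)
      · rwa [hq0]
      · rwa [hqk]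
  have hbne {i : ℕ} (hi : i ≤ k) : q i ≠ b := by
    intro h
    rcases Nat.eq_zero_or_pos i with rfl | h0
    · exact hbx.ne (h.symm.trans hq0)
    · rcases hi.eq_or_lt with rfl | hlt
      · exact hby.ne (h.symm.trans hqk)
      · exact hbA (h ▸ hmem h0 hlt)
  let f : Fin (k + 2) → V := fun i => if i.val ≤ k then q i.val else b
  have hf : Function.Injective f := by
    intro i j hij
    have hi := i.isLt
    have hj := j.isLt
    apply Fin.ext
    by_cases hik : i.val ≤ k <;> by_cases hjk : j.val ≤ k <;>
      simp only [f, hik, hjk, if_true, if_false] at hij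
    · exact hinj hik hjk hij
    · exact absurd hij (hbne hik)
    · exact absurd hij.symm (hbne hjk)
    · omega
  refine (hch (k + 2) (by omega)).false ⟨⟨f, hf⟩, ?_⟩
  intro i j
  have hi := i.isLt
  have hj := j.isLt
  change G.Adj (f i) (f j) ↔ _
  rw [cycleGraph_adj']
  simp only [Fin.val_sub]
  have hsub : ∀ a b : ℕ, a < k + 2 → b < k + 2 →
      ((k + 2 - b + a) % (k + 2) = 1 ↔ a = b + 1 ∨ (a = 0 ∧ b = k + 1)) := by
    intro a b ha hb
    rcases lt_or_ge a b with h | h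
    · rw [Nat.mod_eq_of_lt (by omega)]
      omega
    · rw [show k + 2 - b + a = (a - b) + (k + 2) by omega, Nat.add_mod_right,
        Nat.mod_eq_of_lt (by omega)]
      omega
  rw [hsub _ _ hi hj, hsub _ _ hj hi]
  by_cases hik : i.val ≤ k <;> by_cases hjk : j.val ≤ k <;>
    simp only [f, hik, hjk, if_true, if_false]
  · rw [hadj hik hjk]
    omega
  · rw [G.adj_comm, hbq hik]
    omega
  · rw [hbq hjk]
    omega
  · simp only [G.irrefl, false_iff]
    omega

open Classical in
/-- Every nonempty finite vertex set of a chordal graph contains a vertex that is simplicial in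
the induced subgraph. -/
lemma IsChordal.exists_simplicial (hch : IsChordal G) (W : Finset V) (hW : W.Nonempty) :
    ∃ s ∈ W, ∀ x ∈ W, ∀ y ∈ W, G.Adj s x → G.Adj s y → x ≠ y → G.Adj x y := by
  induction W using Finset.strongInduction with
  | H W ih =>
    let F := W.powerset.filter fun A : Finset V =>
      (G.induce (A : Set V)).Connected ∧ ∃ b ∈ W, b ∉ A ∧ ∀ a ∈ A, ¬ G.Adj b a
    by_cases hF : F.Nonempty
    · obtain ⟨A, hAmax⟩ := F.exists_maximal hF
      obtain ⟨hAW, hAc, b₀, hb₀W, hb₀A, hb₀⟩ := by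
        simpa only [F, Finset.mem_filter, Finset.mem_powerset] using hAmax.prop
      let B := W.filter fun b => b ∉ A ∧ ∀ a ∈ A, ¬ G.Adj b a
      have hfull : ∀ x ∈ W, x ∉ A → (∃ a ∈ A, G.Adj x a) → ∀ b ∈ B, G.Adj b x := by
        intro x hxW hxA ⟨a, haA, hxa⟩ b hb
        obtain ⟨hbW, hbA, hb⟩ := by simpa only [B, Finset.mem_filter] using hb
        by_contra hbx
        have hsing : (G.induce {x}).Preconnected := fun u v => by
          rw [Subsingleton.elim u v]
        have hmem : insert x A ∈ F := by
          simp only [F, Finset.mem_filter, Finset.mem_powerset]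
          refine ⟨Finset.insert_subset hxW hAW, ?_, b, hbW, ?_, ?_⟩
          · have := connected_induce_union hAc.preconnected hsing (Finset.mem_coe.2 haA) rfl
              hxa.symm
            rwa [Finset.coe_insert, Set.insert_eq, Set.union_comm]
          · rw [Finset.mem_insert, not_or]
            exact ⟨fun h => hb a haA (h ▸ hxa), hbA⟩
          · intro c hc
            rcases Finset.mem_insert.1 hc with rfl | hc
            · exact hbx
            · exact hb c hc
        exact hxA (hAmax.2 hmem (Finset.subset_insert x A) (Finset.mem_insert_self x A))
      have hBW : B ⊂ W := by
        refine ⟨Finset.filter_subset _ _, fun h => ?_⟩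
        obtain ⟨⟨a, ha⟩⟩ := hAc.nonempty
        exact (Finset.mem_filter.1 (h (hAW ha))).2.1 ha
      obtain ⟨s, hsB, hs⟩ := ih B hBW ⟨b₀, Finset.mem_filter.2 ⟨hb₀W, hb₀A, hb₀⟩⟩
      obtain ⟨hsW, hsA, hsadj⟩ := Finset.mem_filter.1 hsB
      have hcases : ∀ x ∈ W, G.Adj s x → x ∈ B ∨ (x ∉ A ∧ ∃ a ∈ A, G.Adj x a) := by
        intro x hxW hsx
        have hxA : x ∉ A := fun h => hsadj x h hsx
        by_cases h : ∃ a ∈ A, G.Adj x a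
        · exact Or.inr ⟨hxA, h⟩
        · push Not at h
          exact Or.inl (Finset.mem_filter.2 ⟨hxW, hxA, h⟩)
      refine ⟨s, hsW, fun x hxW y hyW hsx hsy hxy => ?_⟩
      rcases hcases x hxW hsx with hx | ⟨hxA, hx⟩ <;> rcases hcases y hyW hsy with hy | ⟨hyA, hy⟩
      · exact hs x hx y hy hsx hsy hxy
      · exact hfull y hyW hyA hy x hx
      · exact (hfull x hxW hxA hx y hy).symm
      · exact hch.adj_of_preconnected hAc.preconnected hsA hsadj hx hy hsx hsy hxy
    · obtain ⟨s, hs⟩ := hW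
      have hcomplete : ∀ x ∈ W, ∀ y ∈ W, x ≠ y → G.Adj x y := by
        intro x hx y hy hxy
        by_contra hnadj
        refine hF ⟨{x}, ?_⟩
        simp only [F, Finset.mem_filter, Finset.mem_powerset]
        refine ⟨Finset.singleton_subset_iff.2 hx, ?_, y, hy, ?_, ?_⟩
        · rw [Finset.coe_singleton]
          exact { preconnected := fun u v => by rw [Subsingleton.elim u v] }
        · simpa using hxy.symm
        · simpa [G.adj_comm] using hnadj
      exact ⟨s, hs, fun x hx y hy _ _ hxy => hcomplete x hx y hy hxy⟩

open Classical in
/-- A finite vertex set of a chordal graph spanning an edge contains two distinct vertices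
such that the closed neighborhood of the one is contained in that of the other. -/
lemma IsChordal.exists_dominated (hch : IsChordal G) (W : Finset V)
    (hW : ∃ x ∈ W, ∃ y ∈ W, G.Adj x y) :
    ∃ u ∈ W, ∃ v ∈ W, G.Adj u v ∧ ∀ x ∈ W, G.Adj v x → x ≠ u → G.Adj u x := by
  obtain ⟨x₀, hx₀, y₀, hy₀, hxy₀⟩ := hW
  obtain ⟨v, hv, hsimp⟩ := hch.exists_simplicial (W.filter fun x => ∃ y ∈ W, G.Adj x y)
    ⟨x₀, Finset.mem_filter.2 ⟨hx₀, y₀, hy₀, hxy₀⟩⟩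
  obtain ⟨hvW, u, huW, hvu⟩ := Finset.mem_filter.1 hv
  refine ⟨u, huW, v, hvW, hvu.symm, fun x hx hvx hxu => ?_⟩
  exact hsimp u (Finset.mem_filter.2 ⟨huW, v, hvW, hvu.symm⟩)
    x (Finset.mem_filter.2 ⟨hx, v, hvW, hvx.symm⟩) hvu hvx hxu.symm

end Chordal

section Collapse

variable {V : Type}

@[ext]
lemma Cplx.ext {K L : Cplx V} (h : ∀ σ, K.faces σ ↔ L.faces σ) : K = L := by
  cases K
  cases L
  congr
  exact funext fun σ => propext (h σ)

/-- The deletion from a complex of all faces containing `σ`. -/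
def Cplx.del (K : Cplx V) (σ : Finset V) : Cplx V where
  faces τ := K.faces τ ∧ ¬ σ ⊆ τ
  down_closed _ _ hst h := ⟨K.down_closed hst h.1, fun hσ => h.2 (hσ.trans hst)⟩

open Classical in
/-- If the link of a vertex `u` is a cone with apex `v`, the complex collapses to the deletion
of `u`. -/
lemma Cplx.collapses_del_singleton [Fintype V] (K : Cplx V) {u v : V} (huv : u ≠ v)
    (hcone : ∀ σ, K.faces σ → u ∈ σ → K.faces (insert v σ)) : Collapses K (K.del {u}) := by
  induction hn : (Finset.univ.filter fun σ => K.faces σ ∧ u ∈ σ).card using Nat.strong_induction_on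
    generalizing K with
  | _ n ih =>
    let F := Finset.univ.filter fun σ : Finset V => K.faces σ ∧ u ∈ σ ∧ v ∉ σ
    by_cases hF : F.Nonempty
    · obtain ⟨τ, hτmax⟩ := F.exists_maximal hF
      obtain ⟨hτ, huτ, hvτ⟩ := by
        simpa only [F, Finset.mem_filter, Finset.mem_univ, true_and] using hτmax.prop
      have habove : ∀ ρ, K.faces ρ → τ ⊆ ρ → ρ ⊆ insert v τ := by
        intro ρ hρ hτρ
        have hsub : τ ⊆ ρ.erase v := Finset.subset_erase.2 ⟨hτρ, hvτ⟩
        have hmem : ρ.erase v ∈ F := by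
          simp only [F, Finset.mem_filter, Finset.mem_univ, true_and]
          exact ⟨K.down_closed (Finset.erase_subset v ρ) hρ, hsub huτ, Finset.notMem_erase v ρ⟩
        exact Finset.subset_insert_iff.2 (hτmax.2 hmem hsub)
      have hvface : K.faces (insert v τ) := hcone τ hτ huτ
      have hfacet : K.IsFacet (insert v τ) :=
        ⟨hvface, fun ρ hρ h => h.antisymm (habove ρ hρ ((Finset.subset_insert v τ).trans h))⟩
      have hfree : K.IsFreeFace τ := by
        refine ⟨⟨u, huτ⟩, hτ, fun h => ?_, insert v τ,
          ⟨hfacet, Finset.subset_insert v τ⟩, fun ρ ⟨hρ, hτρ⟩ => ?_⟩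
        · exact hvτ (h.2 hvface (Finset.subset_insert v τ) ▸ Finset.mem_insert_self v τ)
        · exact hρ.2 hvface (habove ρ hρ.1 hτρ)
      have hstep : CollapseStep K (K.del τ) := ⟨τ, hfree, fun _ => Iff.rfl⟩
      have hcone' : ∀ σ, (K.del τ).faces σ → u ∈ σ → (K.del τ).faces (insert v σ) :=
        fun σ hσ huσ => ⟨hcone σ hσ.1 huσ,
          fun h => hσ.2 ((Finset.subset_insert_iff_of_notMem hvτ).1 h)⟩
      have hlt : (Finset.univ.filter fun σ => (K.del τ).faces σ ∧ u ∈ σ).card < n := by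
        rw [← hn]
        refine Finset.card_lt_card ⟨fun σ hσ => ?_, fun h => ?_⟩
        · rw [Finset.mem_filter] at hσ ⊢
          exact ⟨hσ.1, hσ.2.1.1, hσ.2.2⟩
        · have := h (Finset.mem_filter.2 ⟨Finset.mem_univ τ, hτ, huτ⟩)
          exact (Finset.mem_filter.1 this).2.1.2 subset_rfl
      have hdel : (K.del τ).del {u} = K.del {u} := by
        ext σ
        simp only [Cplx.del, Finset.singleton_subset_iff]
        exact ⟨fun h => ⟨h.1.1, h.2⟩, fun h => ⟨⟨h.1, fun hτσ => h.2 (hτσ huτ)⟩, h.2⟩⟩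
      exact hdel ▸ (ih _ hlt (K.del τ) hcone' rfl).head hstep
    · have hdel : K.del {u} = K := by
        ext σ
        simp only [Cplx.del, Finset.singleton_subset_iff, and_iff_left_iff_imp]
        intro hσ huσ
        refine hF ⟨σ.erase v, ?_⟩
        simp only [F, Finset.mem_filter, Finset.mem_univ, true_and]
        exact ⟨K.down_closed (Finset.erase_subset v σ) hσ, Finset.mem_erase.2 ⟨huv, huσ⟩,
          Finset.notMem_erase v σ⟩
      exact hdel.symm ▸ Relation.ReflTransGen.refl

/-- The neighborhood complex of the subgraph of `G` induced on `W`, as a complex on all of `V`. -/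
def nbdCpxOn (G : SimpleGraph V) (W : Finset V) : Cplx V where
  faces σ := σ ⊆ W ∧ ∃ v ∈ W, ∀ u ∈ σ, G.Adj v u
  down_closed := by
    rintro σ τ hst ⟨hW, v, hv, h⟩
    exact ⟨hst.trans hW, v, hv, fun u hu => h u (hst hu)⟩

lemma nbdCpxOn_univ [Fintype V] (G : SimpleGraph V) : nbdCpxOn G Finset.univ = nbdCpx G := by
  ext σ
  simp [nbdCpxOn, nbdCpx]

/-- On an independent set of `G`, the neighborhood complex of the complement is the boundary of a
simplex. -/
lemma nbdCpxOn_compl_faces_iff {G : SimpleGraph V} {t : Finset V}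
    (ht : ∀ u ∈ t, ∀ v ∈ t, ¬ G.Adj u v) (σ : Finset V) :
    (nbdCpxOn Gᶜ t).faces σ ↔ σ ⊂ t := by
  constructor
  · rintro ⟨hσ, w, hw, h⟩
    exact ⟨hσ, fun hts => (h w (hts hw)).ne rfl⟩
  · rintro ⟨hσ, hts⟩
    obtain ⟨w, hw, hwσ⟩ := Finset.not_subset.1 hts
    exact ⟨hσ, w, hw, fun x hx =>
      (compl_adj _ _ _).2 ⟨fun h => hwσ (h ▸ hx), ht w hw x (hσ hx)⟩⟩

lemma indNum_eq_card [Fintype V] {G : SimpleGraph V} {t : Finset V}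
    (ht : ∀ u ∈ t, ∀ v ∈ t, ¬ G.Adj u v)
    (hmax : ∀ s : Finset V, (∀ u ∈ s, ∀ v ∈ s, ¬ G.Adj u v) → s.card ≤ t.card) :
    indNum G = t.card := by
  refine IsGreatest.csSup_eq ⟨⟨t, ht, rfl⟩, ?_⟩
  rintro _ ⟨s, hs, rfl⟩
  exact hmax s hs

variable [Fintype V] [DecidableEq V]

/-- Deleting a vertex whose neighborhood is contained in the neighborhood of another vertex is a
collapse of neighborhood complexes. -/
lemma nbdCpxOn_collapses_erase (G : SimpleGraph V) {W : Finset V} {u v : V} (huv : u ≠ v)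
    (hv : v ∈ W) (hdom : ∀ x ∈ W, G.Adj u x → G.Adj v x) :
    Collapses (nbdCpxOn G W) (nbdCpxOn G (W.erase u)) := by
  have hdel : (nbdCpxOn G W).del {u} = nbdCpxOn G (W.erase u) := by
    ext σ
    simp only [Cplx.del, nbdCpxOn, Finset.singleton_subset_iff, Finset.subset_erase]
    constructor
    · rintro ⟨⟨hσ, w, hw, h⟩, hu⟩
      refine ⟨⟨hσ, hu⟩, ?_⟩
      by_cases hwu : w = u
      · exact ⟨v, Finset.mem_erase.2 ⟨huv.symm, hv⟩, fun x hx => hdom x (hσ hx) (hwu ▸ h x hx)⟩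
      · exact ⟨w, Finset.mem_erase.2 ⟨hwu, hw⟩, h⟩
    · rintro ⟨⟨hσ, hu⟩, w, hw, h⟩
      exact ⟨⟨hσ, w, Finset.mem_of_mem_erase hw, h⟩, hu⟩
  rw [← hdel]
  refine Cplx.collapses_del_singleton _ huv ?_
  rintro σ ⟨hσ, w, hw, h⟩ hu
  have hwv : G.Adj w v := (hdom w hw (h u hu).symm).symm
  convert show (nbdCpxOn G W).faces (insert v σ) from
    ⟨Finset.insert_subset hv hσ, w, hw, fun x hx => ?_⟩
  rcases Finset.mem_insert.1 hx with rfl | hx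
  · exact hwv
  · exact h x hx

/-- Repeatedly deleting dominated vertices reduces a chordal graph to a maximum independent
set. -/
lemma IsChordal.exists_collapses {G : SimpleGraph V} (hch : IsChordal G) (W : Finset V) :
    ∃ t ⊆ W, (∀ u ∈ t, ∀ v ∈ t, ¬ G.Adj u v) ∧
      (∀ s ⊆ W, (∀ u ∈ s, ∀ v ∈ s, ¬ G.Adj u v) → s.card ≤ t.card) ∧
      Collapses (nbdCpxOn Gᶜ W) (nbdCpxOn Gᶜ t) := by
  induction W using Finset.strongInduction with
  | H W ih =>
    by_cases hW : ∃ x ∈ W, ∃ y ∈ W, G.Adj x y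
    · obtain ⟨u, hu, v, hv, huv, hdom⟩ := hch.exists_dominated W hW
      obtain ⟨t, htW, hind, hmax, hcol⟩ := ih (W.erase u) (Finset.erase_ssubset hu)
      refine ⟨t, htW.trans (Finset.erase_subset u W), hind, fun s hs hsind => ?_, ?_⟩
      · by_cases hus : u ∈ s
        · have hvs : v ∉ s := fun h => hsind u hus v h huv
          rw [← Finset.card_erase_add_one hus,
            ← Finset.card_insert_of_notMem fun h => hvs (Finset.mem_of_mem_erase h)]
          have hnadj : ∀ x ∈ s.erase u, ¬ G.Adj v x := fun x hx hvx =>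
            hsind u hus x (Finset.mem_of_mem_erase hx)
              (hdom x (hs (Finset.mem_of_mem_erase hx)) hvx (Finset.ne_of_mem_erase hx))
          refine hmax _ ?_ ?_
          · exact Finset.insert_subset (Finset.mem_erase.2 ⟨huv.ne', hv⟩)
              (Finset.erase_subset_erase u hs)
          · intro x hx y hy
            rcases Finset.mem_insert.1 hx with hxv | hxs <;>
              rcases Finset.mem_insert.1 hy with hyv | hys
            · exact hxv ▸ hyv ▸ G.irrefl
            · exact hxv ▸ hnadj y hys
            · exact hyv ▸ fun h => hnadj x hxs h.symm
            · exact hsind x (Finset.mem_of_mem_erase hxs) y (Finset.mem_of_mem_erase hys)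
        · exact hmax s (Finset.subset_erase.2 ⟨hs, hus⟩) hsind
      · refine Relation.ReflTransGen.trans (nbdCpxOn_collapses_erase Gᶜ huv.ne hv ?_) hcol
        intro x hx hux
        rw [compl_adj] at hux ⊢
        refine ⟨?_, fun hvx => hux.2 (hdom x hx hvx hux.1.symm)⟩
        rintro rfl
        exact hux.2 huv
    · push Not at hW
      exact ⟨W, subset_rfl, hW, fun s hs _ => Finset.card_le_card hs, Relation.ReflTransGen.refl⟩

end Collapse

section Realization

/-- The boundary of the standard simplex on `ι`. -/
def simplexBoundary (ι : Type) [Fintype ι] : Set (ι → ℝ) :=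
  {f | ∑ i, f i = 1 ∧ (∀ i, 0 ≤ f i) ∧ ∃ i, f i = 0}

/-- The hyperplane of vectors with coordinate sum zero. -/
def sumZero (ι : Type) [Fintype ι] : Submodule ℝ (ι → ℝ) :=
  LinearMap.ker (Fintype.linearCombination ℝ fun _ : ι => (1 : ℝ))

lemma mem_sumZero {ι : Type} [Fintype ι] {g : ι → ℝ} : g ∈ sumZero ι ↔ ∑ i, g i = 0 := by
  simp [sumZero, Fintype.linearCombination_apply]

lemma finrank_sumZero (ι : Type) [Fintype ι] [Nonempty ι] :
    Module.finrank ℝ (sumZero ι) = Fintype.card ι - 1 := by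
  classical
  have hrange : LinearMap.range (Fintype.linearCombination ℝ fun _ : ι => (1 : ℝ)) = ⊤ := by
    rw [LinearMap.range_eq_top]
    intro r
    obtain ⟨i⟩ := ‹Nonempty ι›
    exact ⟨Pi.single i r, by simp [Fintype.linearCombination_apply]⟩
  have := LinearMap.finrank_range_add_finrank_ker
    (Fintype.linearCombination ℝ fun _ : ι => (1 : ℝ))
  rw [hrange, finrank_top, Module.finrank_self, Module.finrank_fintype_fun_eq_card] at this
  change 1 + Module.finrank ℝ (sumZero ι) = _ at this
  omega

variable {ι : Type} [Fintype ι] [Nonempty ι]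

/-- The negative of the smallest coordinate. -/
noncomputable def negMin (g : ι → ℝ) : ℝ :=
  Finset.univ.sup' Finset.univ_nonempty fun i => - g i

lemma continuous_negMin : Continuous (negMin : (ι → ℝ) → ℝ) :=
  Continuous.finset_sup'_apply _ fun i _ => (continuous_apply i).neg

lemma neg_le_negMin (g : ι → ℝ) (i : ι) : - g i ≤ negMin g :=
  Finset.le_sup' (fun i => - g i) (Finset.mem_univ i)

lemma exists_eq_negMin (g : ι → ℝ) : ∃ i, - g i = negMin g := by
  obtain ⟨i, -, hi⟩ := Finset.exists_mem_eq_sup' Finset.univ_nonempty fun i : ι => - g i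
  exact ⟨i, hi.symm⟩

lemma negMin_eq {g : ι → ℝ} {m : ℝ} (hle : ∀ i, - g i ≤ m) (heq : ∃ i, - g i = m) :
    negMin g = m := by
  obtain ⟨i, rfl⟩ := heq
  obtain ⟨j, hj⟩ := exists_eq_negMin g
  exact le_antisymm (hj ▸ hle j) (neg_le_negMin g i)

lemma negMin_pos {g : ι → ℝ} (hg : g ∈ sumZero ι) (hne : g ≠ 0) : 0 < negMin g := by
  by_contra! h
  have hnn : ∀ i ∈ Finset.univ, 0 ≤ g i := fun i _ => by
    linarith [neg_le_negMin g i]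
  refine hne (funext fun i => ?_)
  exact (Finset.sum_eq_zero_iff_of_nonneg hnn).1 (mem_sumZero.1 hg) i (Finset.mem_univ i)

/-- The point at which the ray from the barycenter in direction `g` leaves the simplex. -/
noncomputable def rayExit (g : ι → ℝ) : ι → ℝ :=
  fun i => (Fintype.card ι : ℝ)⁻¹ + (Fintype.card ι * negMin g)⁻¹ * g i

lemma card_pos_real : (0 : ℝ) < Fintype.card ι := by
  exact_mod_cast Fintype.card_pos

lemma rayExit_mem {g : ι → ℝ} (hg : g ∈ sumZero ι) (hne : g ≠ 0) :
    rayExit g ∈ simplexBoundary ι := by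
  have hm := negMin_pos hg hne
  have hn := card_pos_real (ι := ι)
  have hform : ∀ i, rayExit g i = (Fintype.card ι * negMin g)⁻¹ * (negMin g + g i) := by
    intro i
    rw [rayExit]
    field_simp
  refine ⟨?_, fun i => ?_, ?_⟩
  · simp only [rayExit, Finset.sum_add_distrib, ← Finset.mul_sum, mem_sumZero.1 hg]
    simp [hn.ne']
  · rw [hform]
    have := neg_le_negMin g i
    exact mul_nonneg (by positivity) (by linarith)
  · obtain ⟨i, hi⟩ := exists_eq_negMin g
    exact ⟨i, by rw [hform, ← hi]; ring⟩

/-- The displacement of a point of the hyperplane of coordinate sum one from the barycenter. -/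
noncomputable def fromBarycenter (f : ι → ℝ) : ι → ℝ := fun i => f i - (Fintype.card ι : ℝ)⁻¹

lemma fromBarycenter_mem {f : ι → ℝ} (hf : f ∈ simplexBoundary ι) :
    fromBarycenter f ∈ sumZero ι := by
  have hn := card_pos_real (ι := ι)
  rw [mem_sumZero]
  simp [fromBarycenter, hf.1, hn.ne']

lemma negMin_fromBarycenter {f : ι → ℝ} (hf : f ∈ simplexBoundary ι) :
    negMin (fromBarycenter f) = (Fintype.card ι : ℝ)⁻¹ := by
  obtain ⟨-, hnn, i, hi⟩ := hf
  refine negMin_eq (fun j => ?_) ⟨i, ?_⟩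
  · simp only [fromBarycenter]
    linarith [hnn j]
  · simp [fromBarycenter, hi]

lemma negMin_smul {r : ℝ} (hr : 0 ≤ r) (g : ι → ℝ) : negMin (r • g) = r * negMin g := by
  refine negMin_eq (fun i => ?_) ?_
  · have := mul_le_mul_of_nonneg_left (neg_le_negMin g i) hr
    simpa using this
  · obtain ⟨i, hi⟩ := exists_eq_negMin g
    exact ⟨i, by rw [← hi]; simp⟩

lemma fromBarycenter_ne_zero {f : ι → ℝ} (hf : f ∈ simplexBoundary ι) :
    fromBarycenter f ≠ 0 := by
  intro h
  have hn := card_pos_real (ι := ι)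
  have := negMin_fromBarycenter hf
  rw [h, negMin_eq (m := 0) (by simp) ⟨Classical.arbitrary ι, by simp⟩] at this
  exact (inv_pos.2 hn).ne this

lemma rayExit_smul_fromBarycenter {f : ι → ℝ} (hf : f ∈ simplexBoundary ι) {r : ℝ} (hr : 0 < r) :
    rayExit (r • fromBarycenter f) = f := by
  have hn := card_pos_real (ι := ι)
  funext i
  rw [rayExit, negMin_smul hr.le, negMin_fromBarycenter hf]
  simp only [Pi.smul_apply, smul_eq_mul, fromBarycenter]
  field_simp
  ring

lemma fromBarycenter_rayExit (g : ι → ℝ) :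
    fromBarycenter (rayExit g) = (Fintype.card ι * negMin g)⁻¹ • g := by
  funext i
  simp [fromBarycenter, rayExit]

/-- The boundary of a simplex is homeomorphic to a sphere by radial projection from the
barycenter. -/
theorem nonempty_simplexBoundary_homeomorph_sphere (ι : Type) [Fintype ι] [Nonempty ι] :
    Nonempty (simplexBoundary ι ≃ₜ
      Metric.sphere (0 : EuclideanSpace ℝ (Fin (Fintype.card ι - 1))) 1) := by
  have hn := card_pos_real (ι := ι)
  let e : sumZero ι ≃L[ℝ] EuclideanSpace ℝ (Fin (Fintype.card ι - 1)) :=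
    ContinuousLinearEquiv.ofFinrankEq (by rw [finrank_sumZero, finrank_euclideanSpace_fin])
  let d : simplexBoundary ι → sumZero ι := fun f => ⟨fromBarycenter f.1, fromBarycenter_mem f.2⟩
  have hd : ∀ f, e (d f) ≠ 0 := fun f h =>
    fromBarycenter_ne_zero f.2 (congrArg Subtype.val (e.map_eq_zero_iff.1 h))
  have hdcont : Continuous d := by
    refine Continuous.subtype_mk (continuous_pi fun i => ?_) _
    exact ((continuous_apply i).comp continuous_subtype_val).sub continuous_const
  have hz : ∀ z : Metric.sphere (0 : EuclideanSpace ℝ (Fin (Fintype.card ι - 1))) 1,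
      ((e.symm z : sumZero ι) : ι → ℝ) ≠ 0 := fun z h => by
    have h₀ : (z : EuclideanSpace ℝ (Fin (Fintype.card ι - 1))) = 0 :=
      e.symm.map_eq_zero_iff.1 (Subtype.ext h)
    exact ne_zero_of_mem_unit_sphere z h₀
  refine ⟨{
    toFun := fun f => ⟨‖e (d f)‖⁻¹ • e (d f), ?_⟩
    invFun := fun z => ⟨rayExit (e.symm z : sumZero ι), rayExit_mem (e.symm z).2 (hz z)⟩
    left_inv := fun f => ?_
    right_inv := fun z => ?_
    continuous_toFun := ?_
    continuous_invFun := ?_ }⟩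
  · rw [mem_sphere_zero_iff_norm, norm_smul, norm_inv, norm_norm,
      inv_mul_cancel₀ (norm_ne_zero_iff.2 (hd f))]
  · refine Subtype.ext ?_
    simp only [map_smul, ContinuousLinearEquiv.symm_apply_apply]
    exact rayExit_smul_fromBarycenter f.2 (inv_pos.2 (norm_pos_iff.2 (hd f)))
  · refine Subtype.ext ?_
    have hm := negMin_pos (e.symm z).2 (hz z)
    set c := ((Fintype.card ι : ℝ) * negMin ((e.symm z : sumZero ι) : ι → ℝ))⁻¹ with hc
    have hcpos : 0 < c := by positivity
    have hdz : d ⟨rayExit (e.symm z : sumZero ι), rayExit_mem (e.symm z).2 (hz z)⟩ =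
        c • e.symm z := Subtype.ext (fromBarycenter_rayExit _)
    simp only [hdz, map_smul, ContinuousLinearEquiv.apply_symm_apply]
    rw [norm_smul, norm_eq_of_mem_sphere z, Real.norm_of_nonneg hcpos.le, mul_one, smul_smul,
      inv_mul_cancel₀ hcpos.ne', one_smul]
  · refine Continuous.subtype_mk ?_ _
    have hed : Continuous fun f => e (d f) := e.continuous.comp hdcont
    exact (hed.norm.inv₀ fun f => norm_ne_zero_iff.2 (hd f)).smul hed
  · refine Continuous.subtype_mk (continuous_pi fun i => ?_) _
    have hg : Continuous
        fun z : Metric.sphere (0 : EuclideanSpace ℝ (Fin (Fintype.card ι - 1))) 1 =>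
          ((e.symm z : sumZero ι) : ι → ℝ) :=
      continuous_subtype_val.comp (e.symm.continuous.comp continuous_subtype_val)
    refine continuous_const.add (Continuous.mul (Continuous.inv₀ ?_ fun z => ?_) ?_)
    · exact continuous_const.mul (continuous_negMin.comp hg)
    · exact (mul_pos hn (negMin_pos (e.symm z).2 (hz z))).ne'
    · exact (continuous_apply i).comp hg

open Classical in
/-- The realization of the complex of proper subsets of `t` is the boundary of the simplex
on `t`. -/
theorem nonempty_space_homeomorph_simplexBoundary {V : Type} [Fintype V] (K : Cplx V)
    (t : Finset V) (hK : ∀ σ, K.faces σ ↔ σ ⊂ t) :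
    Nonempty (K.space ≃ₜ simplexBoundary t) := by
  have hout : ∀ f : K.space, ∀ v ∉ t, f.1 v = 0 := by
    intro f v hv
    by_contra h
    exact hv (((hK _).1 f.2.2.2).1 (Finset.mem_filter.2 ⟨Finset.mem_univ v, h⟩))
  let extZero : (t → ℝ) → V → ℝ := fun g v => if h : v ∈ t then g ⟨v, h⟩ else 0
  have hext : ∀ g (i : t), extZero g i = g i := fun g i => by simp [extZero]
  have hext_out : ∀ g, ∀ v ∉ t, extZero g v = 0 := fun g v hv => by simp [extZero, hv]
  have hsum : ∀ f : V → ℝ, (∀ v ∉ t, f v = 0) → ∑ v, f v = ∑ i : t, f i := by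
    intro f hf
    rw [Finset.sum_coe_sort t f]
    exact (Finset.sum_subset (Finset.subset_univ t) fun v _ hv => hf v hv).symm
  refine ⟨{
    toFun := fun f => ⟨fun i => f.1 i, ?_, fun i => f.2.2.1 i, ?_⟩
    invFun := fun g => ⟨extZero g.1, ?_, fun v => ?_, ?_⟩
    left_inv := fun f => ?_
    right_inv := fun g => ?_
    continuous_toFun := ?_
    continuous_invFun := ?_ }⟩
  · rw [← hsum f.1 (hout f)]
    exact f.2.1
  · obtain ⟨v, hv, hvf⟩ := Finset.not_subset.1 ((hK _).1 f.2.2.2).2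
    refine ⟨⟨v, hv⟩, ?_⟩
    by_contra h
    exact hvf (Finset.mem_filter.2 ⟨Finset.mem_univ v, h⟩)
  · rw [hsum _ (hext_out g.1)]
    simp only [hext]
    exact g.2.1
  · by_cases hv : v ∈ t
    · exact (hext g.1 ⟨v, hv⟩).symm ▸ g.2.2.1 ⟨v, hv⟩
    · exact (hext_out g.1 v hv).ge
  · rw [hK]
    refine ⟨fun v hv => ?_, fun h => ?_⟩
    · by_contra hvt
      exact (Finset.mem_filter.1 hv).2 (hext_out g.1 v hvt)
    · obtain ⟨i, hi⟩ := g.2.2.2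
      exact (Finset.mem_filter.1 (h i.2)).2 ((hext g.1 i).trans hi)
  · refine Subtype.ext (funext fun v => ?_)
    by_cases hv : v ∈ t
    · exact hext _ ⟨v, hv⟩
    · exact (hext_out _ v hv).trans (hout f v hv).symm
  · exact Subtype.ext (funext fun i => hext g.1 i)
  · refine Continuous.subtype_mk (continuous_pi fun i => ?_) _
    exact (continuous_apply (i : V)).comp continuous_subtype_val
  · refine Continuous.subtype_mk (continuous_pi fun v => ?_) _
    by_cases hv : v ∈ t
    · simp only [extZero, hv, dif_pos]
      exact (continuous_apply _).comp continuous_subtype_val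
    · simp only [extZero, hv, dif_neg, not_false_iff]
      exact continuous_const

/-- The realization of the complex of proper subsets of `t` is a sphere. -/
theorem nonempty_space_homeomorph_sphere {V : Type} [Fintype V] (K : Cplx V)
    (t : Finset V) (hK : ∀ σ, K.faces σ ↔ σ ⊂ t) :
    Nonempty (K.space ≃ₜ Metric.sphere (0 : EuclideanSpace ℝ (Fin (t.card - 1))) 1) := by
  rcases t.eq_empty_or_nonempty with rfl | ht
  · have : IsEmpty K.space := ⟨fun f => Finset.not_ssubset_empty _ ((hK _).1 f.2.2.2)⟩
    have : IsEmpty (Metric.sphere (0 : EuclideanSpace ℝ (Fin ((∅ : Finset V).card - 1))) 1) := by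
      refine ⟨fun z => ne_zero_of_mem_unit_sphere z ?_⟩
      ext i
      exact i.elim0
    exact ⟨Homeomorph.empty⟩
  · have : Nonempty t := ht.to_subtype
    obtain ⟨e₁⟩ := nonempty_space_homeomorph_simplexBoundary K t hK
    obtain ⟨e₂⟩ := nonempty_simplexBoundary_homeomorph_sphere t
    rw [Fintype.card_coe] at e₂
    exact ⟨e₁.trans e₂⟩

end Realization

/-- Proposition 4.9: for a chordal graph `G`, the neighborhood complex of the
complement of `G` collapses to a subcomplex isomorphic to the neighborhood complex of
the complete graph on `α(G)` vertices (the boundary of the `(α(G)-1)`-simplex), which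
is homotopy equivalent to the sphere `S^{α(G)-2}`. -/
theorem chordal_nbd_compl_collapses_to_boundary {V : Type} [Fintype V] [DecidableEq V]
    (G : SimpleGraph V) (hch : IsChordal G) :
    ∃ L : Cplx V, Collapses (nbdCpx Gᶜ) L ∧
      (∃ t : Finset V, t.card = indNum G ∧ ∀ σ : Finset V, L.faces σ ↔ σ ⊂ t) ∧
      Nonempty (ContinuousMap.HomotopyEquiv L.space
        (Metric.sphere (0 : EuclideanSpace ℝ (Fin (indNum G - 1))) 1)) := by
  obtain ⟨t, -, hind, hmax, hcol⟩ := hch.exists_collapses Finset.univ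
  have hcard : indNum G = t.card := indNum_eq_card hind fun s => hmax s (Finset.subset_univ s)
  have hfaces := nbdCpxOn_compl_faces_iff hind
  rw [nbdCpxOn_univ] at hcol
  refine ⟨nbdCpxOn Gᶜ t, hcol, ⟨t, hcard.symm, hfaces⟩, ?_⟩
  obtain ⟨e⟩ := nonempty_space_homeomorph_sphere _ t hfaces
  rw [hcard]
  exact ⟨e.toHomotopyEquiv⟩
end

section
/- Let G be a finite simple graph whose minimum degree is at least 2. Assume that for every vertex v of G of degree 2 there exists a vertex a such that the length of the shortest path between v and a is at least 3. Then the dominance complex D(G) is 1-connected (path-connected with trivial fundamental group). -/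
open SimpleGraph

section NerveCover

open Path.Homotopic Set unitInterval

variable {X : Type*} [TopologicalSpace X] {s t : Set X} {x y z : X}

/-- Two paths with the same endpoints inside a simply connected set are homotopic. -/
theorem IsSimplyConnected.homotopic_of_forall_mem (hs : IsSimplyConnected s) (p q : Path x y)
    (hp : ∀ t, p t ∈ s) (hq : ∀ t, q t ∈ s) : p.Homotopic q := by
  have := hs.simplyConnectedSpace
  lift x to s using by simpa using hp 0
  lift y to s using by simpa using hp 1
  let p' : Path x y := ⟨⟨fun t ↦ ⟨p t, hp t⟩, by fun_prop⟩, by simp, by simp⟩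
  let q' : Path x y := ⟨⟨fun t ↦ ⟨q t, hq t⟩, by fun_prop⟩, by simp, by simp⟩
  exact (SimplyConnectedSpace.paths_homotopic p' q').map ⟨Subtype.val, continuous_subtype_val⟩

/-- The homotopy class of the paths joining two points inside a simply connected set. -/
noncomputable def IsSimplyConnected.pathClass (hs : IsSimplyConnected s) (hx : x ∈ s)
    (hy : y ∈ s) : Path.Homotopic.Quotient x y :=
  .mk (hs.isPathConnected.joinedIn x hx y hy).somePath

theorem IsSimplyConnected.mk_eq_pathClass (hs : IsSimplyConnected s) (hx : x ∈ s) (hy : y ∈ s)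
    (p : Path x y) (hp : ∀ t, p t ∈ s) : Path.Homotopic.Quotient.mk p = hs.pathClass hx hy :=
  Path.Homotopic.Quotient.eq.2 <| hs.homotopic_of_forall_mem _ _ hp (JoinedIn.somePath_mem _)

theorem IsSimplyConnected.pathClass_trans (hs : IsSimplyConnected s) (hx : x ∈ s) (hy : y ∈ s)
    (hz : z ∈ s) : (hs.pathClass hx hy).trans (hs.pathClass hy hz) = hs.pathClass hx hz := by
  rw [pathClass, pathClass, ← Quotient.mk_trans]
  refine hs.mk_eq_pathClass _ _ _ fun t ↦ ?_
  rw [Path.trans_apply]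
  split_ifs <;> exact JoinedIn.somePath_mem _ _

theorem IsSimplyConnected.pathClass_self (hs : IsSimplyConnected s) (hx : x ∈ s) :
    hs.pathClass hx hx = .refl x :=
  (hs.mk_eq_pathClass hx hx (.refl x) fun _ ↦ hx).symm

theorem IsSimplyConnected.pathClass_eq_of_inter (hs : IsSimplyConnected s)
    (ht : IsSimplyConnected t) (hst : IsPathConnected (s ∩ t)) (hx : x ∈ s ∩ t)
    (hy : y ∈ s ∩ t) : hs.pathClass hx.1 hy.1 = ht.pathClass hx.2 hy.2 := by
  have h := (hst.joinedIn x hx y hy).somePath_mem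
  rw [← hs.mk_eq_pathClass hx.1 hy.1 _ fun t ↦ (h t).1, ht.mk_eq_pathClass _ _ _ fun t ↦ (h t).2]

/-- A choice of homotopy classes of paths from a base point which is compatible with all paths
contained in members of an open cover is compatible with all paths. -/
theorem Path.Homotopic.Quotient.trans_eq_of_open_cover {ι : Type*} {U : ι → Set X}
    (hU : ∀ i, IsOpen (U i)) (hcover : ⋃ i, U i = univ)
    (c : ∀ x, Path.Homotopic.Quotient z x)
    (hc : ∀ i (x y : X) (p : Path x y), (∀ t, p t ∈ U i) → (c x).trans (.mk p) = c y)
    (p : Path x y) : (c x).trans (.mk p) = c y := by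
  obtain ⟨t, ht0, htm, ⟨n, hn⟩, ht⟩ :=
    exists_monotone_Icc_subset_open_cover_unitInterval (c := fun i ↦ p ⁻¹' U i)
      (fun i ↦ (hU i).preimage p.continuous) (by rw [← preimage_iUnion, hcover]; simp)
  have key (m : ℕ) : (c (p (t 0))).trans (.mk (p.subpath (t 0) (t m))) = c (p (t m)) := by
    induction m with
    | zero => simp
    | succ m ih =>
      obtain ⟨i, hi⟩ := ht m
      have hstep := hc i _ _ (p.subpath (t m) (t (m + 1))) fun r ↦ by
        have hr : p.subpath (t m) (t (m + 1)) r ∈ range (p.subpath (t m) (t (m + 1))) := ⟨r, rfl⟩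
        rw [p.range_subpath_of_le _ _ (htm m.le_succ)] at hr
        obtain ⟨u, hu, hur⟩ := hr
        exact hur ▸ hi hu
      have hsub : Quotient.mk (p.subpath (t 0) (t (m + 1))) =
          (Quotient.mk (p.subpath (t 0) (t m))).trans (.mk (p.subpath (t m) (t (m + 1)))) := by
        rw [← Quotient.mk_trans]
        exact (Quotient.eq.2 ⟨Path.Homotopy.subpathTransSubpath p _ _ _⟩).symm
      rw [hsub, ← Quotient.trans_assoc, ih, hstep]
  have of_cast {a b : X} (ha : a = x) (hb : b = y)
      (h : (c a).trans (.mk (p.cast ha hb)) = c b) : (c x).trans (.mk p) = c y := by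
    subst ha hb
    exact h
  have h := key n
  rw [ht0, hn n le_rfl, Path.subpath_zero_one] at h
  exact of_cast p.source p.target h

/-- A space covered by simply connected open sets with path connected pairwise intersections is
simply connected provided that every triangle of the nerve of the cover is filled, either by a
triple intersection or by a cone over its boundary. -/
theorem simplyConnectedSpace_of_open_cover {ι : Type*} [Nonempty ι] {U : ι → Set X}
    (hU : ∀ i, IsOpen (U i)) (hcover : ⋃ i, U i = univ)
    (hsc : ∀ i, IsSimplyConnected (U i)) (hpc : ∀ i j, IsPathConnected (U i ∩ U j))
    (htri : ∀ i j k, (U i ∩ U j ∩ U k).Nonempty ∨ ∃ l, (U i ∩ U l ∩ U j).Nonempty ∧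
      (U j ∩ U l ∩ U k).Nonempty ∧ (U i ∩ U l ∩ U k).Nonempty) :
    SimplyConnectedSpace X := by
  choose b hb using fun i ↦ (hsc i).nonempty
  choose m hm using fun i j ↦ (hpc i j).nonempty
  let e (i j : ι) : Path.Homotopic.Quotient (b i) (b j) :=
    ((hsc i).pathClass (hb i) (hm i j).1).trans ((hsc j).pathClass (hm i j).2 (hb j))
  have he (i j : ι) (x : X) (hi : x ∈ U i) (hj : x ∈ U j) :
      e i j = ((hsc i).pathClass (hb i) hi).trans ((hsc j).pathClass hj (hb j)) := by
    rw [← (hsc i).pathClass_trans (hb i) (hm i j).1 hi, Quotient.trans_assoc,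
      (hsc i).pathClass_eq_of_inter (hsc j) (hpc i j) (hm i j) ⟨hi, hj⟩,
      (hsc j).pathClass_trans]
  clear_value e
  have he_of_mem (i j k : ι) (h : (U i ∩ U j ∩ U k).Nonempty) :
      (e i j).trans (e j k) = e i k := by
    obtain ⟨x, ⟨hi, hj⟩, hk⟩ := h
    rw [he i j x hi hj, he j k x hj hk, he i k x hi hk, Quotient.trans_assoc,
      ← Quotient.trans_assoc ((hsc j).pathClass hj (hb j)), (hsc j).pathClass_trans,
      (hsc j).pathClass_self, Quotient.refl_trans]
  have he_inv (i j : ι) : (e i j).trans (e j i) = .refl _ := by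
    rw [he_of_mem i j i ⟨m i j, hm i j, (hm i j).1⟩, he i i _ (hb i) (hb i),
      (hsc i).pathClass_self, Quotient.refl_trans]
  have he_trans (i j k : ι) : (e i j).trans (e j k) = e i k := by
    obtain h | ⟨l, h₁, h₂, h₃⟩ := htri i j k
    · exact he_of_mem i j k h
    · rw [← he_of_mem i l j h₁, ← he_of_mem j l k h₂, ← he_of_mem i l k h₃,
        Quotient.trans_assoc, ← Quotient.trans_assoc (e l j), he_inv, Quotient.refl_trans]
  choose v hv using fun x ↦ iUnion_eq_univ_iff.1 hcover x
  let o : ι := Classical.arbitrary ι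
  let c (x : X) : Path.Homotopic.Quotient (b o) x :=
    (e o (v x)).trans ((hsc (v x)).pathClass (hb _) (hv x))
  have hc (i : ι) (x : X) (hx : x ∈ U i) :
      c x = (e o i).trans ((hsc i).pathClass (hb i) hx) := by
    simp only [c]
    rw [← he_trans o i (v x), he i (v x) x hx (hv x), Quotient.trans_assoc, Quotient.trans_assoc,
      (hsc (v x)).pathClass_trans, (hsc (v x)).pathClass_self, Quotient.trans_refl]
  have hpath {x y : X} (p : Path x y) : (c x).trans (.mk p) = c y := by
    refine Quotient.trans_eq_of_open_cover hU hcover c (fun i x y p hp ↦ ?_) p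
    have hx : x ∈ U i := by simpa using hp 0
    have hy : y ∈ U i := by simpa using hp 1
    rw [hc i x hx, hc i y hy, (hsc i).mk_eq_pathClass hx hy p hp, Quotient.trans_assoc,
      (hsc i).pathClass_trans]
  rw [simply_connected_iff_paths_homotopic']
  refine ⟨⟨⟨b o⟩, fun x y ↦ ⟨((c x).symm.trans (c y)).out⟩⟩, fun {x y} p q ↦ ?_⟩
  have h := congrArg (Quotient.trans (c x).symm) ((hpath p).trans (hpath q).symm)
  simp only [← Quotient.trans_assoc, Quotient.symm_trans, Quotient.refl_trans] at h
  exact Quotient.eq.1 h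

end NerveCover

namespace Cplx

variable {V : Type} [Fintype V] (K : Cplx V)

/-- The points of the realization whose support contains `σ`. -/
def openStar (σ : Finset V) : Set K.space := {x | ∀ v ∈ σ, 0 < x.1 v}

theorem isOpen_openStar (σ : Finset V) : IsOpen (K.openStar σ) := by
  have h (v : V) : Continuous fun x : K.space ↦ x.1 v :=
    (continuous_apply v).comp continuous_subtype_val
  simp only [openStar, Set.ofPred_forall]
  exact isOpen_biInter_finset fun v _ ↦ isOpen_lt continuous_const (h v)

theorem openStar_union [DecidableEq V] (σ τ : Finset V) :
    K.openStar (σ ∪ τ) = K.openStar σ ∩ K.openStar τ := by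
  ext x
  simp only [openStar, Finset.mem_union, Set.mem_inter_iff, Set.mem_ofPred_eq]
  grind

theorem iUnion_openStar_singleton : ⋃ v, K.openStar {v} = Set.univ := by
  refine Set.iUnion_eq_univ_iff.2 fun x ↦ ?_
  obtain ⟨v, -, hv⟩ := Finset.exists_lt_of_sum_lt (s := Finset.univ) (f := fun _ ↦ (0 : ℝ))
    (g := x.1) (by rw [x.2.1]; simp)
  exact ⟨v, by simpa [openStar] using hv⟩

theorem isSimplyConnected_openStar {σ : Finset V} (hσ : K.faces σ) (hne : σ.Nonempty) :
    IsSimplyConnected (K.openStar σ) := by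
  classical
  have hemb : Topology.IsEmbedding (Subtype.val : K.space → V → ℝ) := .subtypeVal
  have hcard : (0 : ℝ) < σ.card := by exact_mod_cast hne.card_pos
  let β : V → ℝ := fun v ↦ if v ∈ σ then (σ.card : ℝ)⁻¹ else 0
  have hβ0 (v : V) : 0 ≤ β v := by simp only [β]; split_ifs <;> positivity
  have hβ : β ∈ (Subtype.val : K.space → V → ℝ) '' K.openStar σ := by
    refine ⟨⟨β, ?_, hβ0, K.down_closed (fun v ↦ ?_) hσ⟩, fun v hv ↦ ?_, rfl⟩
    · simp [β, hcard.ne']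
    · simp +contextual [β]
    · simpa [β, hv] using hcard
  have hstar : StarConvex ℝ β ((Subtype.val : K.space → V → ℝ) '' K.openStar σ) := by
    rintro _ ⟨x, hx, rfl⟩ a b ha hb hab
    have hsum : ∑ v, β v = 1 := by simp [β, hcard.ne']
    refine ⟨⟨a • β + b • x.1, ?_, fun v ↦ ?_, K.down_closed (fun v ↦ ?_) x.2.2.2⟩,
      fun v hv ↦ ?_, rfl⟩
    · simp [Finset.sum_add_distrib, ← Finset.mul_sum, hsum, x.2.1, hab]
    · have := hβ0 v
      have := x.2.2.1 v
      simp only [Pi.add_apply, Pi.smul_apply, smul_eq_mul]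
      positivity
    · simp only [Finset.mem_filter, Finset.mem_univ, true_and]
      intro hv hxv
      by_cases hvσ : v ∈ σ
      · exact (hx v hvσ).ne' hxv
      · simp [β, hvσ, hxv] at hv
    · have hxv := hx v hv
      have hβv : 0 < β v := by simpa [β, hv] using hcard
      simp only [Pi.add_apply, Pi.smul_apply, smul_eq_mul]
      obtain rfl | ha := ha.eq_or_lt
      · obtain rfl : b = 1 := by linarith
        simpa using hxv
      · positivity
  refine hemb.isSimplyConnected_image.1 ?_
  have := hstar.contractibleSpace ⟨β, hβ⟩
  exact SimplyConnectedSpace.ofContractible _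

/-- A complex with complete `1`-skeleton is simply connected if every triangle of its `1`-skeleton
either is a face or bounds a cone. -/
theorem simplyConnectedSpace_of_pairs [DecidableEq V] [Nonempty V]
    (hpair : ∀ u v, K.faces {u, v})
    (htri : ∀ u v w, K.faces {u, v, w} ∨
      ∃ a, K.faces {u, a, v} ∧ K.faces {v, a, w} ∧ K.faces {u, a, w}) :
    SimplyConnectedSpace K.space := by
  have hinter (u v : V) : K.openStar {u} ∩ K.openStar {v} = K.openStar {u, v} := by
    rw [← openStar_union]; rfl
  have hnonempty (u v w : V) (h : K.faces {u, v, w}) :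
      (K.openStar {u} ∩ K.openStar {v} ∩ K.openStar {w}).Nonempty := by
    rw [← openStar_union, ← openStar_union, Finset.union_assoc]
    exact (K.isSimplyConnected_openStar h (by simp)).nonempty
  refine simplyConnectedSpace_of_open_cover (fun v ↦ K.isOpen_openStar {v})
    K.iUnion_openStar_singleton (fun v ↦ ?_) (fun u v ↦ ?_) fun u v w ↦ ?_
  · exact K.isSimplyConnected_openStar (by simpa using hpair v v) (by simp)
  · rw [hinter]
    exact (K.isSimplyConnected_openStar (hpair u v) (by simp)).isPathConnected
  · exact (htri u v w).imp (hnonempty _ _ _) fun ⟨a, h₁, h₂, h₃⟩ ↦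
      ⟨a, hnonempty _ _ _ h₁, hnonempty _ _ _ h₂, hnonempty _ _ _ h₃⟩

end Cplx

section Dominance

variable {V : Type} [Fintype V] [DecidableEq V] (G : SimpleGraph V)

/-- A set is a face of the dominance complex iff it contains no closed neighborhood. -/
theorem not_domCpx_faces_iff [DecidableRel G.Adj] (σ : Finset V) :
    ¬ (domCpx G).faces σ ↔ ∃ z, insert z (G.neighborFinset z) ⊆ σ := by
  simp only [domCpx, not_forall, not_exists, not_and, Finset.insert_subset_iff]
  refine exists_congr fun z ↦ ⟨fun h ↦ ⟨?_, fun w hw ↦ ?_⟩, fun ⟨hz, h⟩ w hw hwz ↦ ?_⟩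
  · by_contra hz
    exact h z hz (.inl rfl)
  · by_contra hwσ
    exact h w hwσ (.inr ((G.mem_neighborFinset z w).1 hw).symm)
  · obtain rfl | hwz := hwz
    · exact hw hz
    · exact hw (h ((G.mem_neighborFinset z w).2 hwz.symm))

theorem three_le_card_of_not_domCpx_faces [DecidableRel G.Adj] (hmin : 2 ≤ G.minDegree)
    {σ : Finset V} (hσ : ¬ (domCpx G).faces σ) : 3 ≤ σ.card := by
  obtain ⟨z, hz⟩ := (not_domCpx_faces_iff G σ).1 hσ
  have h := Finset.card_le_card hz
  rw [Finset.card_insert_of_notMem (G.notMem_neighborFinset_self z),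
    G.card_neighborFinset_eq_degree] at h
  have := G.minDegree_le_degree z
  omega

/-- A non-face with at most three elements is the closed neighborhood of a vertex of degree
two. -/
theorem exists_eq_closedNeighborhood_of_not_domCpx_faces [DecidableRel G.Adj]
    (hmin : 2 ≤ G.minDegree) {σ : Finset V} (hσ : ¬ (domCpx G).faces σ) (hcard : σ.card ≤ 3) :
    ∃ z, G.degree z = 2 ∧ σ = insert z (G.neighborFinset z) := by
  obtain ⟨z, hz⟩ := (not_domCpx_faces_iff G σ).1 hσ
  have h := Finset.card_le_card hz
  have hins := Finset.card_insert_of_notMem (G.notMem_neighborFinset_self z)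
  rw [G.card_neighborFinset_eq_degree] at hins
  have := G.minDegree_le_degree z
  exact ⟨z, by omega, (Finset.eq_of_subset_of_card_le hz (by omega)).symm⟩

theorem SimpleGraph.ne_and_not_adj_of_three_le_edist {V : Type*} {G : SimpleGraph V} {z a : V}
    (h : 3 ≤ G.edist z a) :
    z ≠ a ∧ ¬ G.Adj z a ∧ ∀ w, G.Adj z w → ¬ G.Adj w a := by
  have key (p : G.Walk z a) : 3 ≤ p.length := by exact_mod_cast h.trans (SimpleGraph.edist_le p)
  refine ⟨?_, fun hza ↦ ?_, fun w hzw hwa ↦ ?_⟩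
  · rintro rfl
    simpa using key .nil
  · simpa using key (.cons hza .nil)
  · simpa using key (.cons hzw (.cons hwa .nil))

/-- A vertex at distance at least three from `z` spans a face with any two elements of the closed
neighborhood of `z`. -/
theorem domCpx_faces_of_far [DecidableRel G.Adj] (hmin : 2 ≤ G.minDegree) {z a u v : V}
    (ha : 3 ≤ G.edist z a) (hu : u = z ∨ G.Adj z u) (hv : v = z ∨ G.Adj z v) :
    (domCpx G).faces {u, a, v} := by
  by_contra hf
  obtain ⟨w, -, hw⟩ :=
    exists_eq_closedNeighborhood_of_not_domCpx_faces G hmin hf Finset.card_le_three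
  obtain ⟨hza, hnadj, hpath⟩ := SimpleGraph.ne_and_not_adj_of_three_le_edist ha
  have hfar (y : V) (hy : y = z ∨ G.Adj z y) : y ≠ a ∧ ¬ G.Adj y a := by
    obtain rfl | hy := hy
    · exact ⟨hza, hnadj⟩
    · exact ⟨fun h ↦ hnadj (h ▸ hy), hpath y hy⟩
  have hwmem : w ∈ ({u, a, v} : Finset V) := hw ▸ Finset.mem_insert_self _ _
  have hmem (y : V) (hy : y ∈ ({u, a, v} : Finset V)) : y = w ∨ G.Adj w y := by
    simpa [hw] using hy
  have hnear (hwa : w ≠ a ∧ ¬ G.Adj w a) : False :=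
    (hmem a (by simp)).elim (fun h ↦ hwa.1 h.symm) hwa.2
  simp only [Finset.mem_insert, Finset.mem_singleton] at hwmem
  obtain rfl | rfl | rfl := hwmem
  · exact hnear (hfar w hu)
  · exact (hmem u (by simp)).elim (hfar u hu).1 fun h ↦ (hfar u hu).2 h.symm
  · exact hnear (hfar w hv)

end Dominance

/-- Corollary 5.9: let `G` be a graph of minimum degree at least `2` such that every
vertex `v` of degree `2` admits a vertex `a` at distance at least `3` from `v`.
Then the dominance complex of `G` is `1`-connected. -/
theorem dominance_simplyConnected_of_far_vertex {V : Type} [Fintype V] [DecidableEq V]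
    (G : SimpleGraph V) [DecidableRel G.Adj] (hmin : 2 ≤ G.minDegree)
    (h : ∀ v : V, G.degree v = 2 → ∃ a : V, 3 ≤ G.edist v a) :
    SimplyConnectedSpace (domCpx G).space := by
  have hV : Nonempty V := by
    by_contra hV
    rw [not_nonempty_iff] at hV
    simp at hmin
  refine (domCpx G).simplyConnectedSpace_of_pairs (fun u v ↦ ?_) fun u v w ↦ ?_
  · by_contra hf
    have h₁ := three_le_card_of_not_domCpx_faces G hmin hf
    have h₂ := Finset.card_le_two (a := u) (b := v)
    omega
  · by_cases hf : (domCpx G).faces {u, v, w}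
    · exact .inl hf
    obtain ⟨z, hz, hσ⟩ :=
      exists_eq_closedNeighborhood_of_not_domCpx_faces G hmin hf Finset.card_le_three
    obtain ⟨a, ha⟩ := h z hz
    have hmem (y : V) (hy : y ∈ ({u, v, w} : Finset V)) : y = z ∨ G.Adj z y := by
      simpa [hσ] using hy
    have hu := hmem u (by simp)
    have hv := hmem v (by simp)
    have hw := hmem w (by simp)
    exact .inr ⟨a, domCpx_faces_of_far G hmin ha hu hv, domCpx_faces_of_far G hmin ha hv hw,
      domCpx_faces_of_far G hmin ha hu hw⟩
end
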